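/- arXiv:2102.03392 — 5 statements merged into one kernel-verified Lean document; each statement's English description precedes it below -/
import Mathlib

section
/- If α > 0 is irrational, then there is no quadratic packing polynomial on the sector S(α); that is, no polynomial P : ℝ² → ℝ of total degree 2 restricts to a bijection from S(α) ∩ ℤ² onto the non-negative integers. -/
/-!
Up to the factor `1/2`, a polynomial of degree at most two that is integer valued on the lattice
points of the sector is an integral quadratic polynomial
`R = A x² + 2 B x y + C y² + D x + E y + F`, because its second differences are integers
(`integrality`). The sector is closed under addition, and that is used throughout.

* If `A C - B² ≠ 0`, let `G` be the Gram matrix of the quadratic part. Two points have the same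
  value under `R` as soon as their difference is `G`-orthogonal to a vector `w` and their midpoint
  lies on the line in direction `w` through the (rational) critical point of `R`. For `w` in the
  interior of the sector and in a suitable residue class, there are distinct lattice points of
  this kind, and translating them by a large multiple of `w` keeps these properties and moves them
  into the sector. So `R` is not injective there (`nondegenerate_false`).
* If `G k = 0` for a nonzero lattice vector `k` of the sector, then `R` is affine along `k` with
  slope `σ`. For `h` in the sector, `R (σ² h) - R 0` is a multiple of `σ`, and this difference can
  be compensated by moving along `k`; again `R` is not injective (`kernel_false`).
* In the remaining case the quadratic part is a positive multiple of the square of a linear form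
  `X = u x + v y` that is positive on the sector. A unimodular change of coordinates turns the
  sector into `m₁ X ≤ Y ≤ m₂ X` and the polynomial into `(ε/2) X² + r X + s Y + t`. Counting the
  lattice points with `X ≤ T` gives `(m₂ - m₁) T² / 2 + O(T)`, counting their values gives
  `ε T² / 2 + O(T)`; hence `m₂ - m₁ = ε` (`width_eq`). But `ε` is rational, while
  `m₂ - m₁ = α / (u (u + α v))` is not.
-/

namespace SectorPacking

/-- The lattice point `(x, y)` belongs to the sector `0 ≤ y ≤ α x`. -/
def InSec (α : ℝ) (x y : ℤ) : Prop := 0 ≤ (y : ℝ) ∧ (y : ℝ) ≤ α * x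

/-- The integral quadratic polynomial `A x² + 2 B x y + C y² + D x + E y + F`. -/
def quad (A B C D E F x y : ℤ) : ℤ :=
  A * x ^ 2 + 2 * B * x * y + C * y ^ 2 + D * x + E * y + F

/-! ### Failure of injectivity -/

lemma exists_nat_mul_ge {a : ℝ} (ha : 0 < a) (b : ℝ) : ∃ N : ℕ, ∀ n : ℕ, N ≤ n → b ≤ n * a := by
  obtain ⟨N, hN⟩ := exists_nat_ge (b / a)
  refine ⟨N, fun n hn => ?_⟩
  have : (N : ℝ) ≤ n := by exact_mod_cast hn
  exact (div_le_iff₀ ha).1 (hN.trans this)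

/-- Every lattice point is moved into the sector by a large multiple of an interior vector. -/
lemma exists_inSec_add {α : ℝ} {w₁ w₂ : ℤ} (h₁ : 0 < (w₂ : ℝ)) (h₂ : (w₂ : ℝ) < α * w₁)
    (x y : ℤ) : ∃ N : ℕ, ∀ n : ℕ, N ≤ n → InSec α (n * w₁ + x) (n * w₂ + y) := by
  obtain ⟨N, hN⟩ := exists_nat_mul_ge h₁ (-y)
  obtain ⟨N', hN'⟩ := exists_nat_mul_ge (sub_pos.2 h₂) (y - α * x)
  refine ⟨max N N', fun n hn => ⟨?_, ?_⟩⟩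
  · have := hN n (le_trans (le_max_left _ _) hn)
    push_cast; linarith
  · have := hN' n (le_trans (le_max_right _ _) hn)
    push_cast; linarith

lemma nondegenerate_false {α : ℝ} (hα : 0 < α) {A B C D E F : ℤ}
    (hinj : ∀ x y x' y', InSec α x y → InSec α x' y' →
      quad A B C D E F x y = quad A B C D E F x' y' → x = x' ∧ y = y')
    (hΔ : A * C - B ^ 2 ≠ 0) : False := by
  obtain ⟨n, hn⟩ := exists_nat_gt (1 / α)
  have hn' : 1 < α * n := by rwa [div_lt_iff₀' hα] at hn
  set Δ := A * C - B ^ 2 with hΔdef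
  -- `2 Δ` times the critical point of the polynomial
  set c₁ := -(C * D - B * E) with hc₁
  set c₂ := -(A * E - B * D) with hc₂
  have hΔ2 : (0 : ℝ) < 2 * (Δ : ℝ) ^ 2 := by
    have : (Δ : ℝ) ≠ 0 := by exact_mod_cast hΔ
    positivity
  -- `M` is large enough for `w = c + 2 Δ² M (n, 1)` to lie in the interior of the sector
  obtain ⟨N, hN⟩ := exists_nat_mul_ge hΔ2 (1 - c₂)
  obtain ⟨N', hN'⟩ := exists_nat_mul_ge (mul_pos hΔ2 (sub_pos.2 hn')) (1 - (α * c₁ - c₂))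
  set M := max N N'
  have hM := hN M (le_max_left _ _)
  have hM' := hN' M (le_max_right _ _)
  set z₁ : ℤ := Δ * M * n with hz₁
  set z₂ : ℤ := Δ * M with hz₂
  set w₁ := c₁ + 2 * Δ * z₁ with hw₁
  set w₂ := c₂ + 2 * Δ * z₂ with hw₂
  have hw2pos : (0 : ℝ) < w₂ := by
    rw [hw₂, hz₂]; push_cast; nlinarith
  have hw1 : (w₂ : ℝ) < α * w₁ := by
    rw [hw₁, hw₂, hz₁, hz₂]; push_cast; nlinarith
  -- `v` is orthogonal to `w` with respect to the Gram matrix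
  set v₁ := -(B * w₁ + C * w₂) with hv₁
  set v₂ := A * w₁ + B * w₂ with hv₂
  obtain ⟨K, hK⟩ := exists_inSec_add hw2pos hw1 (-z₁ + v₁) (-z₂ + v₂)
  obtain ⟨K', hK'⟩ := exists_inSec_add hw2pos hw1 (-z₁ - v₁) (-z₂ - v₂)
  have hp := hK (max K K') (le_max_left _ _)
  have hq := hK' (max K K') (le_max_right _ _)
  generalize (max K K') = k at hp hq
  have key : quad A B C D E F (k * w₁ + (-z₁ + v₁)) (k * w₂ + (-z₂ + v₂)) =
      quad A B C D E F (k * w₁ + (-z₁ - v₁)) (k * w₂ + (-z₂ - v₂)) := by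
    -- the midpoint minus the critical point is a rational multiple of `w`
    have hz1 : 2 * Δ * z₁ = w₁ - c₁ := by rw [hw₁]; ring
    have hz2 : 2 * Δ * z₂ = w₂ - c₂ := by rw [hw₂]; ring
    apply mul_left_cancel₀ hΔ
    clear_value z₁ z₂ w₁ w₂
    unfold quad
    rw [← sub_eq_zero]
    have : Δ * (A * (k * w₁ + (-z₁ + v₁)) ^ 2
          + 2 * B * (k * w₁ + (-z₁ + v₁)) * (k * w₂ + (-z₂ + v₂))
          + C * (k * w₂ + (-z₂ + v₂)) ^ 2
          + D * (k * w₁ + (-z₁ + v₁)) + E * (k * w₂ + (-z₂ + v₂)) + F)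
        - Δ * (A * (k * w₁ + (-z₁ - v₁)) ^ 2
          + 2 * B * (k * w₁ + (-z₁ - v₁)) * (k * w₂ + (-z₂ - v₂))
          + C * (k * w₂ + (-z₂ - v₂)) ^ 2
          + D * (k * w₁ + (-z₁ - v₁)) + E * (k * w₂ + (-z₂ - v₂)) + F)
        = 4 * Δ * k * (A * w₁ * v₁ + B * (w₁ * v₂ + w₂ * v₁) + C * w₂ * v₂)
          - 2 * (A * (2 * Δ * z₁) * v₁ + B * ((2 * Δ * z₁) * v₂ + (2 * Δ * z₂) * v₁)
            + C * (2 * Δ * z₂) * v₂)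
          + 2 * Δ * (D * v₁ + E * v₂) := by ring
    rw [this, hz1, hz2, hv₁, hv₂, hc₁, hc₂, hΔdef]
    ring
  obtain ⟨h1, h2⟩ := hinj _ _ _ _ hp hq key
  have hv1 : v₁ = 0 := by linarith
  have hv2 : v₂ = 0 := by linarith
  have : Δ * w₂ = 0 := by
    have : Δ * w₂ = -A * v₁ - B * v₂ := by rw [hv₁, hv₂, hΔdef]; ring
    rw [this, hv1, hv2]; ring
  rcases mul_eq_zero.1 this with h | h
  · exact hΔ h
  · rw [h] at hw2pos; simp at hw2pos

lemma InSec.comb {α : ℝ} {x y x' y' : ℤ} (h : InSec α x y) (h' : InSec α x' y') {m n : ℤ}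
    (hm : 0 ≤ m) (hn : 0 ≤ n) : InSec α (m * x + n * x') (m * y + n * y') := by
  have hm' : (0 : ℝ) ≤ m := by exact_mod_cast hm
  have hn' : (0 : ℝ) ≤ n := by exact_mod_cast hn
  constructor
  · push_cast
    exact add_nonneg (mul_nonneg hm' h.1) (mul_nonneg hn' h'.1)
  · push_cast
    nlinarith [mul_le_mul_of_nonneg_left h.2 hm', mul_le_mul_of_nonneg_left h'.2 hn']

lemma kernel_false {α : ℝ} (hα : 0 < α) {A B C D E F : ℤ}
    (hinj : ∀ x y x' y', InSec α x y → InSec α x' y' →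
      quad A B C D E F x y = quad A B C D E F x' y' → x = x' ∧ y = y')
    {k₁ k₂ : ℤ} (hk : InSec α k₁ k₂) (hk0 : k₁ ≠ 0)
    (hG₁ : A * k₁ + B * k₂ = 0) (hG₂ : B * k₁ + C * k₂ = 0) : False := by
  set σ := D * k₁ + E * k₂ with hσ
  have hline : ∀ x y t : ℤ, quad A B C D E F (x + t * k₁) (y + t * k₂) =
      quad A B C D E F x y + t * σ := by
    intro x y t
    unfold quad
    rw [hσ]
    linear_combination (t * (2 * x + t * k₁)) * hG₁ + (t * (2 * y + t * k₂)) * hG₂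
  have h00 : InSec α 0 0 := by simp [InSec]
  have hσ0 : σ ≠ 0 := by
    intro h
    have := hline 0 0 1
    rw [h] at this
    simp only [zero_add, one_mul, mul_zero, add_zero] at this
    exact hk0 (hinj _ _ _ _ hk h00 this).1
  -- a vector of the sector that is not a multiple of `k`
  obtain ⟨h₁, h₂, hh, hind⟩ : ∃ h₁ h₂ : ℤ, InSec α h₁ h₂ ∧ h₁ * k₂ - h₂ * k₁ ≠ 0 := by
    by_cases hk2 : k₂ = 0
    · obtain ⟨n, hn⟩ := exists_nat_gt (1 / α)
      have hn' : 1 < α * n := by rwa [div_lt_iff₀' hα] at hn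
      refine ⟨n, 1, ⟨by simp, by push_cast; exact hn'.le⟩, ?_⟩
      rw [hk2]; simpa using hk0
    · exact ⟨1, 0, ⟨by simp, by simpa using hα.le⟩, by simpa using hk2⟩
  set m := σ ^ 2 with hm
  have hm0 : 0 < m := by positivity
  -- the difference of the values at `m h` and `0` is `t σ`
  set t := σ * (σ ^ 2 * (A * h₁ ^ 2 + 2 * B * h₁ * h₂ + C * h₂ ^ 2) + (D * h₁ + E * h₂)) with ht
  have hdiff : quad A B C D E F (m * h₁) (m * h₂) = quad A B C D E F 0 0 + t * σ := by
    unfold quad; rw [ht, hm]; ring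
  set K := |t|
  have hKt : 0 ≤ K - t := by have := le_abs_self t; simp only [K]; linarith
  have hK : 0 ≤ K := abs_nonneg t
  have hs1 : InSec α (0 + K * k₁) (0 + K * k₂) := by
    simpa using InSec.comb hk hk hK le_rfl
  have hs2 := InSec.comb hh hk hm0.le hKt
  have := hinj _ _ _ _ hs1 hs2 (by rw [hline, hline, hdiff]; ring)
  have hz : m * (h₁ * k₂ - h₂ * k₁) = 0 := by
    linear_combination k₁ * this.2 - k₂ * this.1
  rcases mul_eq_zero.1 hz with h | h
  · exact hm0.ne' h
  · exact hind h

/-! ### Counting lattice points in the parabolic case -/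

lemma le_zero_of_quadratic_le {a c : ℝ} (h : ∃ N : ℕ, ∀ T : ℕ, N ≤ T → a * (T : ℝ) ^ 2 ≤ c * (T + 1)) :
    a ≤ 0 := by
  by_contra! ha
  obtain ⟨N, hN⟩ := h
  obtain ⟨N', hN'⟩ := exists_nat_mul_ge ha (2 * |c| + 1)
  set T := max (max N N') 1
  have hT1 : (1 : ℝ) ≤ T := by exact_mod_cast le_max_right _ _
  have h1 := hN T ((le_max_left _ _).trans (le_max_left _ _))
  have h2 := hN' T ((le_max_right _ _).trans (le_max_left _ _))
  have h3 : c * (T + 1) ≤ |c| * (T + 1) :=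
    mul_le_mul_of_nonneg_right (le_abs_self c) (by positivity)
  nlinarith [abs_nonneg c]

/-- The lattice points of the sector `m₁ X ≤ Y ≤ m₂ X` with `0 ≤ X ≤ T`, listed by columns. -/
noncomputable def cone (m₁ m₂ : ℝ) (T : ℕ) : Finset (Σ _ : ℕ, ℤ) :=
  (Finset.range (T + 1)).sigma fun X => Finset.Icc ⌈m₁ * X⌉ ⌊m₂ * X⌋

lemma mem_cone {m₁ m₂ : ℝ} {T : ℕ} {q : Σ _ : ℕ, ℤ} :
    q ∈ cone m₁ m₂ T ↔ q.1 ≤ T ∧ m₁ * q.1 ≤ q.2 ∧ (q.2 : ℝ) ≤ m₂ * q.1 := by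
  simp [cone, Int.ceil_le, Int.le_floor]

lemma card_column {m₁ m₂ : ℝ} (h : m₁ < m₂) (X : ℕ) :
    |((Finset.Icc ⌈m₁ * X⌉ ⌊m₂ * X⌋).card : ℝ) - (m₂ - m₁) * X| ≤ 1 := by
  have hX : m₁ * X ≤ m₂ * X := mul_le_mul_of_nonneg_right h.le (by positivity)
  have a1 := Int.floor_le (m₂ * X)
  have a2 := Int.lt_floor_add_one (m₂ * X)
  have b1 := Int.le_ceil (m₁ * X)
  have b2 := Int.ceil_lt_add_one (m₁ * X)
  have hpos : 0 ≤ ⌊m₂ * X⌋ + 1 - ⌈m₁ * X⌉ := by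
    have : (⌈m₁ * X⌉ : ℝ) < ⌊m₂ * X⌋ + 2 := by linarith
    have : ⌈m₁ * X⌉ < ⌊m₂ * X⌋ + 2 := by exact_mod_cast this
    linarith
  rw [Int.card_Icc]
  have : (((⌊m₂ * X⌋ + 1 - ⌈m₁ * X⌉).toNat : ℕ) : ℝ) = ⌊m₂ * X⌋ + 1 - ⌈m₁ * X⌉ := by
    have := Int.toNat_of_nonneg hpos
    exact_mod_cast this
  rw [this, abs_le]
  constructor <;> linarith

lemma card_cone {m₁ m₂ : ℝ} (h : m₁ < m₂) (T : ℕ) :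
    |((cone m₁ m₂ T).card : ℝ) - (m₂ - m₁) * (T * (T + 1) / 2)| ≤ T + 1 := by
  rw [cone, Finset.card_sigma]
  have hs : (m₂ - m₁) * ((T : ℝ) * (T + 1) / 2) = ∑ X ∈ Finset.range (T + 1), (m₂ - m₁) * (X : ℝ) := by
    rw [← Finset.mul_sum]
    congr 1
    induction T with
    | zero => simp
    | succ n ih => rw [Finset.sum_range_succ, ← ih]; push_cast; ring
  rw [hs]
  push_cast
  rw [← Finset.sum_sub_distrib]
  refine (Finset.abs_sum_le_sum_abs _ _).trans ?_
  refine (Finset.sum_le_sum fun X _ => card_column h X).trans ?_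
  simp

/-- If `(ε/2) X² + r X + s Y + t` enumerates the naturals on the lattice points of
`m₁ X ≤ Y ≤ m₂ X`, then comparing areas gives `m₂ - m₁ = ε`. -/
lemma width_eq {m₁ m₂ ε r s t : ℝ} (hm : m₁ < m₂) (hε : 0 < ε) {f : ℤ → ℤ → ℝ}
    (hf : ∀ X Y : ℤ, f X Y = ε / 2 * X ^ 2 + r * X + s * Y + t)
    (hnat : ∀ X Y : ℤ, m₁ * X ≤ Y → (Y : ℝ) ≤ m₂ * X → ∃ k : ℕ, f X Y = k)
    (hinj : ∀ X Y X' Y' : ℤ, m₁ * X ≤ Y → (Y : ℝ) ≤ m₂ * X → m₁ * X' ≤ Y' → (Y' : ℝ) ≤ m₂ * X' →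
      f X Y = f X' Y' → X = X' ∧ Y = Y')
    (hsurj : ∀ k : ℕ, ∃ X Y : ℤ, m₁ * X ≤ Y ∧ (Y : ℝ) ≤ m₂ * X ∧ f X Y = k) :
    m₂ - m₁ = ε := by
  set c := |r| + |s| * (|m₁| + |m₂|) + |t| with hc
  have hc0 : 0 ≤ c := by positivity
  have hX0 : ∀ X Y : ℤ, m₁ * X ≤ Y → (Y : ℝ) ≤ m₂ * X → (0 : ℝ) ≤ X := by
    intro X Y h1 h2
    by_contra! h
    nlinarith
  have hbound : ∀ X Y : ℤ, m₁ * X ≤ Y → (Y : ℝ) ≤ m₂ * X →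
      |f X Y - ε / 2 * X ^ 2| ≤ c * (X + 1) := by
    intro X Y h1 h2
    have hX := hX0 X Y h1 h2
    have hY : |(Y : ℝ)| ≤ (|m₁| + |m₂|) * X := by
      rw [abs_le]
      constructor
      · nlinarith [neg_abs_le m₁, abs_nonneg m₂, mul_nonneg (abs_nonneg m₂) hX,
          mul_le_mul_of_nonneg_right (neg_abs_le m₁) hX]
      · nlinarith [mul_nonneg (abs_nonneg m₁) hX, mul_le_mul_of_nonneg_right (le_abs_self m₂) hX]
    have e : f X Y - ε / 2 * X ^ 2 = r * X + s * Y + t := by rw [hf]; ring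
    rw [e]
    calc |r * X + s * Y + t| ≤ |r * X| + |s * Y| + |t| := abs_add_three _ _ _
      _ = |r| * X + |s| * |(Y : ℝ)| + |t| := by rw [abs_mul, abs_mul, abs_of_nonneg hX]
      _ ≤ |r| * X + |s| * ((|m₁| + |m₂|) * X) + |t| := by gcongr
      _ ≤ c * (X + 1) := by
        rw [hc]
        have := mul_nonneg (abs_nonneg t) hX
        have : 0 ≤ |s| * (|m₁| + |m₂|) := by positivity
        nlinarith [abs_nonneg r]
  -- distinct values at the points with `X ≤ T`
  have hupper : ∀ T : ℕ, ((cone m₁ m₂ T).card : ℝ) ≤ ε / 2 * T ^ 2 + c * (T + 1) + 1 := by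
    intro T
    have hU : 0 ≤ ε / 2 * (T : ℝ) ^ 2 + c * (T + 1) := by positivity
    have hcard : (cone m₁ m₂ T).card ≤
        (Finset.range (⌊ε / 2 * (T : ℝ) ^ 2 + c * (T + 1)⌋₊ + 1)).card := by
      apply Finset.card_le_card_of_injOn (fun q => ⌊f q.1 q.2⌋₊)
      · intro q hq
        obtain ⟨h0, h1, h2⟩ := mem_cone.1 (Finset.mem_coe.1 hq)
        have hb := (abs_le.1 (hbound q.1 q.2 (by exact_mod_cast h1) (by exact_mod_cast h2))).2
        have h0' : (q.1 : ℝ) ≤ T := by exact_mod_cast h0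
        simp only [Finset.coe_range, Set.mem_Iio, Nat.lt_succ_iff]
        apply Nat.floor_le_floor
        push_cast at hb
        have : ε / 2 * (q.1 : ℝ) ^ 2 ≤ ε / 2 * (T : ℝ) ^ 2 := by gcongr
        have : c * ((q.1 : ℝ) + 1) ≤ c * (T + 1) := by gcongr
        linarith
      · intro q hq q' hq' he
        obtain ⟨-, h1, h2⟩ := mem_cone.1 (Finset.mem_coe.1 hq)
        obtain ⟨-, h1', h2'⟩ := mem_cone.1 (Finset.mem_coe.1 hq')
        obtain ⟨k, hk⟩ := hnat q.1 q.2 (by exact_mod_cast h1) (by exact_mod_cast h2)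
        obtain ⟨k', hk'⟩ := hnat q'.1 q'.2 (by exact_mod_cast h1') (by exact_mod_cast h2')
        simp only [hk, hk', Nat.floor_natCast] at he
        obtain ⟨e1, e2⟩ := hinj q.1 q.2 q'.1 q'.2 (by exact_mod_cast h1) (by exact_mod_cast h2)
          (by exact_mod_cast h1') (by exact_mod_cast h2') (by rw [hk, hk', he])
        obtain ⟨a, b⟩ := q
        obtain ⟨a', b'⟩ := q'
        simp only [Nat.cast_inj] at e1 e2
        subst e1 e2
        rfl
    rw [Finset.card_range] at hcard
    have h1 : ((cone m₁ m₂ T).card : ℝ) ≤ (⌊ε / 2 * (T : ℝ) ^ 2 + c * (T + 1)⌋₊ : ℝ) + 1 := by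
      exact_mod_cast hcard
    linarith [Nat.floor_le hU]
  -- small values are attained only at points with `X ≤ T`
  have hlower : ∀ T : ℕ, c / ε ≤ T →
      ε / 2 * (T : ℝ) ^ 2 - c * (T + 1) - 1 ≤ ((cone m₁ m₂ T).card : ℝ) := by
    intro T hT
    have hT' : c ≤ T * ε := (div_le_iff₀ hε).1 hT
    set N := ⌊ε / 2 * (T : ℝ) ^ 2 - c * (T + 1)⌋₊ with hN
    have hcard : (Finset.range N).card ≤ (cone m₁ m₂ T).card := by
      choose x y h1 h2 h3 using hsurj
      apply Finset.card_le_card_of_injOn (fun k => ⟨(x k).toNat, y k⟩)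
      · intro k hk
        have hk : k < N := by simpa using hk
        have hx : (0 : ℝ) ≤ x k := hX0 _ _ (h1 k) (h2 k)
        have hxi : 0 ≤ x k := by exact_mod_cast hx
        have hxc : (((x k).toNat : ℕ) : ℝ) = x k := by
          exact_mod_cast Int.toNat_of_nonneg hxi
        refine Finset.mem_coe.2 (mem_cone.2 ⟨?_, ?_, ?_⟩)
        · by_contra! hlt
          simp only at hlt
          have hlt' : (T : ℝ) < x k := by rw [← hxc]; exact_mod_cast hlt
          have hb := (abs_le.1 (hbound _ _ (h1 k) (h2 k))).1
          rw [h3] at hb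
          have hkN : (k : ℝ) < ε / 2 * (T : ℝ) ^ 2 - c * (T + 1) := by
            have := (Nat.lt_floor_add_one (ε / 2 * (T : ℝ) ^ 2 - c * (T + 1)))
            have hpos : 0 ≤ ε / 2 * (T : ℝ) ^ 2 - c * (T + 1) := by
              by_contra! hneg
              rw [Nat.floor_of_nonpos hneg.le] at hN
              omega
            have h5 := Nat.floor_le hpos
            have : (k : ℝ) < N := by exact_mod_cast hk
            linarith
          nlinarith [mul_nonneg (sub_nonneg.2 hT') (sub_nonneg.2 hlt'.le),
            mul_nonneg hε.le (sq_nonneg ((x k : ℝ) - T))]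
        · simp only [hxc]; exact h1 k
        · simp only [hxc]; exact h2 k
      · intro k _ k' _ he
        simp only [Sigma.mk.injEq, heq_eq_eq] at he
        have e1 : x k = x k' := by
          have a := hX0 _ _ (h1 k) (h2 k)
          have b := hX0 _ _ (h1 k') (h2 k')
          have a' : 0 ≤ x k := by exact_mod_cast a
          have b' : 0 ≤ x k' := by exact_mod_cast b
          omega
        have := h3 k
        rw [e1, he.2, h3 k'] at this
        exact_mod_cast this.symm
    rw [Finset.card_range] at hcard
    have h1 : (N : ℝ) ≤ (cone m₁ m₂ T).card := by exact_mod_cast hcard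
    have := Nat.lt_floor_add_one (ε / 2 * (T : ℝ) ^ 2 - c * (T + 1))
    linarith
  have hle : m₂ - m₁ - ε ≤ 0 := by
    apply le_zero_of_quadratic_le (c := 2 * c + 4)
    refine ⟨0, fun T _ => ?_⟩
    have h1 := (abs_le.1 (card_cone hm T)).1
    have h2 := hupper T
    have h3 : (0 : ℝ) ≤ T := by positivity
    nlinarith [mul_nonneg (sub_pos.2 hm).le h3]
  have hge : ε - (m₂ - m₁) ≤ 0 := by
    apply le_zero_of_quadratic_le (c := 2 * c + 4 + (m₂ - m₁))
    obtain ⟨N, hN⟩ := exists_nat_ge (c / ε)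
    refine ⟨N, fun T hT => ?_⟩
    have hT' : (N : ℝ) ≤ T := by exact_mod_cast hT
    have h1 := (abs_le.1 (card_cone hm T)).2
    have h2 := hlower T (hN.trans hT')
    have h3 : (0 : ℝ) ≤ T := by positivity
    nlinarith [mul_nonneg (sub_pos.2 hm).le h3]
  linarith

/-- The parabolic case in which the square root `(A x + B y) / √A` of the quadratic part is
positive on the sector. -/
lemma parabolic_false {α : ℝ} (hα : 0 < α) (hirr : Irrational α) {A B C D E F : ℤ}
    {p : ℤ → ℤ → ℝ} (hp : ∀ x y, 2 * p x y = (quad A B C D E F x y : ℝ))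
    (hnat : ∀ x y, InSec α x y → ∃ k : ℕ, p x y = k)
    (hinj : ∀ x y x' y', InSec α x y → InSec α x' y' → p x y = p x' y' → x = x' ∧ y = y')
    (hsurj : ∀ k : ℕ, ∃ x y, InSec α x y ∧ p x y = k)
    (hΔ : A * C - B ^ 2 = 0) (hA : 0 < A) (hAB : 0 < (A : ℝ) + α * B) : False := by
  have hg : 0 < (Int.gcd A B : ℤ) := by
    exact_mod_cast Int.gcd_pos_of_ne_zero_left B hA.ne'
  obtain ⟨u, hu⟩ := Int.gcd_dvd_left A B
  obtain ⟨v, hv⟩ := Int.gcd_dvd_right A B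
  have hbez := Int.gcd_eq_gcd_ab A B
  set g : ℤ := (Int.gcd A B : ℤ) with hgdef
  -- Bezout: `u a + v b = 1`
  obtain ⟨a, b, hab⟩ : ∃ a b : ℤ, u * a + v * b = 1 := by
    refine ⟨Int.gcdA A B, Int.gcdB A B, ?_⟩
    apply mul_left_cancel₀ hg.ne'
    linear_combination -hbez - Int.gcdA A B * hu - Int.gcdB A B * hv
  have hu0 : 0 < u := by
    by_contra! h
    nlinarith
  have huR : (0 : ℝ) < u := by exact_mod_cast hu0
  have hAR : (0 : ℝ) < A := by exact_mod_cast hA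
  have hgR : (0 : ℝ) < g := by exact_mod_cast hg
  have huv : (0 : ℝ) < u + α * v := by
    have h1 : (A : ℝ) = g * u := by exact_mod_cast hu
    have h2 : (B : ℝ) = g * v := by exact_mod_cast hv
    have : 0 < (g : ℝ) * (u + α * v) := by rw [h1, h2] at hAB; linarith
    exact pos_of_mul_pos_right this hgR.le
  have habR : (u : ℝ) * a + v * b = 1 := by exact_mod_cast hab
  have hABuv : (A : ℝ) * v = B * u := by
    have : A * v = B * u := by linear_combination v * hu - u * hv
    exact_mod_cast this
  have hCu : (C : ℝ) * u ^ 2 = A * v ^ 2 := by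
    have h1 : (A : ℝ) * C - B ^ 2 = 0 := by exact_mod_cast hΔ
    apply mul_left_cancel₀ hAR.ne'
    linear_combination (u : ℝ) ^ 2 * h1 - (A * v + B * u) * hABuv
  -- coordinates `X = u x + v y`, `Y = -b x + a y`
  have hsec : ∀ X Y : ℤ, InSec α (a * X - v * Y) (b * X + u * Y) ↔
      (-b / u : ℝ) * X ≤ Y ∧ (Y : ℝ) ≤ ((α * a - b) / (u + α * v)) * X := by
    intro X Y
    unfold InSec
    push_cast
    rw [div_mul_eq_mul_div, div_mul_eq_mul_div, div_le_iff₀ huR, le_div_iff₀ huv]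
    constructor <;> rintro ⟨h1, h2⟩ <;> constructor <;> linarith
  have hwidth : (α * a - b) / (u + α * v) - (-b / u : ℝ) = α / (u * (u + α * v)) := by
    field_simp
    linear_combination α * habR
  have hm : (-b / u : ℝ) < (α * a - b) / (u + α * v) := by
    rw [← sub_pos, hwidth]; positivity
  have hres := width_eq (ε := A / u ^ 2) (r := (D * a + E * b) / 2) (s := (-D * v + E * u) / 2)
    (t := F / 2) hm (by positivity) (f := fun X Y => p (a * X - v * Y) (b * X + u * Y))
    (by
      intro X Y
      have h := hp (a * X - v * Y) (b * X + u * Y)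
      have hX : (X : ℝ) = u * (a * X - v * Y) + v * (b * X + u * Y) := by
        linear_combination -X * habR
      have hQ : ∀ x y : ℝ, A / (u : ℝ) ^ 2 * (u * x + v * y) ^ 2 =
          A * x ^ 2 + 2 * B * x * y + C * y ^ 2 := by
        intro x y
        field_simp
        linear_combination 2 * u * x * y * hABuv - y ^ 2 * hCu
      have hQ' := hQ (a * X - v * Y) (b * X + u * Y)
      rw [← hX] at hQ'
      unfold quad at h
      push_cast at h
      linear_combination h / 2 - hQ' / 2)
    (fun X Y h1 h2 => hnat _ _ ((hsec X Y).2 ⟨h1, h2⟩))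
    (by
      intro X Y X' Y' h1 h2 h1' h2' he
      obtain ⟨e1, e2⟩ := hinj _ _ _ _ ((hsec X Y).2 ⟨h1, h2⟩) ((hsec X' Y').2 ⟨h1', h2'⟩) he
      constructor
      · linear_combination u * e1 + v * e2 - (X - X') * hab
      · linear_combination a * e2 - b * e1 - (Y - Y') * hab)
    (by
      intro k
      obtain ⟨x, y, hxy, hk⟩ := hsurj k
      have ex : a * (u * x + v * y) - v * (-b * x + a * y) = x := by
        linear_combination x * hab
      have ey : b * (u * x + v * y) + u * (-b * x + a * y) = y := by
        linear_combination y * hab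
      have hs := (hsec (u * x + v * y) (-b * x + a * y)).1 (by rw [ex, ey]; exact hxy)
      refine ⟨_, _, hs.1, hs.2, ?_⟩
      simp only [ex, ey]
      exact hk)
  rw [hwidth, div_eq_div_iff (by positivity) (by positivity)] at hres
  -- `α (u - A v) = A u`, so `α` would be rational
  have hlin : α * ((u : ℝ) - A * v) = A * u := by
    apply mul_left_cancel₀ huR.ne'
    linear_combination hres
  have hne : ((u - A * v : ℤ) : ℝ) ≠ 0 := by
    intro h
    push_cast at h
    rw [h, mul_zero] at hlin
    exact (mul_pos hAR huR).ne hlin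
  apply hirr
  refine ⟨((A * u : ℤ) : ℚ) / ((u - A * v : ℤ) : ℚ), ?_⟩
  push_cast at hne ⊢
  rw [div_eq_iff hne, hlin]

/-! ### Reduction to integral coefficients -/

/-- The finite differences at points of the sector show that `2 p` has integral coefficients. -/
lemma integrality {α : ℝ} (hα : 0 < α) {a b c d e f : ℝ} {p : ℤ → ℤ → ℝ}
    (hp : ∀ x y : ℤ, p x y = a * x ^ 2 + b * x * y + c * y ^ 2 + d * x + e * y + f)
    (hnat : ∀ x y, InSec α x y → ∃ k : ℕ, p x y = k) :
    ∃ A B C D E F : ℤ, ∀ x y, 2 * p x y = (quad A B C D E F x y : ℝ) := by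
  obtain ⟨n, hn⟩ := exists_nat_gt (2 / α)
  have hn' : 2 < α * n := by rwa [div_lt_iff₀' hα] at hn
  have hmem : ∀ i j : ℕ, j ≤ 2 → ∃ k : ℕ, p (n + i) j = k := by
    intro i j hj
    have hj' : (j : ℝ) ≤ 2 := by exact_mod_cast hj
    refine hnat _ _ ⟨by positivity, ?_⟩
    push_cast
    have : 0 ≤ α * (i : ℝ) := by positivity
    linarith
  obtain ⟨k00, h00⟩ := hmem 0 0 (by norm_num)
  obtain ⟨k10, h10⟩ := hmem 1 0 (by norm_num)
  obtain ⟨k20, h20⟩ := hmem 2 0 (by norm_num)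
  obtain ⟨k01, h01⟩ := hmem 0 1 (by norm_num)
  obtain ⟨k11, h11⟩ := hmem 1 1 (by norm_num)
  obtain ⟨k02, h02⟩ := hmem 0 2 (by norm_num)
  obtain ⟨k, hk⟩ := hnat 0 0 (by simp [InSec])
  rw [hp] at h00 h10 h20 h01 h11 h02 hk
  push_cast at h00 h10 h20 h01 h11 h02 hk
  set A : ℤ := k20 - 2 * k10 + k00 with hA
  set B : ℤ := k11 - k10 - k01 + k00 with hB
  set C : ℤ := k02 - 2 * k01 + k00 with hC
  have eA : 2 * a = A := by
    rw [hA]; push_cast; rw [← h20, ← h10, ← h00]; ring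
  have eB : b = B := by
    rw [hB]; push_cast; rw [← h11, ← h10, ← h01, ← h00]; ring
  have eC : 2 * c = C := by
    rw [hC]; push_cast; rw [← h02, ← h01, ← h00]; ring
  refine ⟨A, B, C, 2 * (k10 - k00) - A * (2 * n + 1), 2 * (k01 - k00) - C - 2 * B * n, 2 * k, ?_⟩
  intro x y
  rw [hp]
  unfold quad
  push_cast
  rw [← eA, ← eB, ← eC, ← h10, ← h00, ← h01, ← hk]
  ring

/-- A real polynomial in two variables of degree at most two, written out. -/
lemma eval_quadratic (P : MvPolynomial (Fin 2) ℝ) (hdeg : P.totalDegree ≤ 2) :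
    ∃ a b c d e f : ℝ, ∀ x y : ℝ, MvPolynomial.eval ![x, y] P =
      a * x ^ 2 + b * x * y + c * y ^ 2 + d * x + e * y + f := by
  have key : ∀ S : Finset (Fin 2 →₀ ℕ), (∀ m ∈ S, m 0 + m 1 ≤ 2) →
      ∃ a b c d e f : ℝ, ∀ x y : ℝ, ∑ m ∈ S, P.coeff m * (x ^ m 0 * y ^ m 1) =
        a * x ^ 2 + b * x * y + c * y ^ 2 + d * x + e * y + f := by
    intro S
    induction S using Finset.induction_on with
    | empty => exact fun _ => ⟨0, 0, 0, 0, 0, 0, by simp⟩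
    | insert m S hm ih =>
      intro hS
      obtain ⟨a, b, c, d, e, f, h⟩ := ih fun m' hm' => hS m' (Finset.mem_insert_of_mem hm')
      have hle := hS m (Finset.mem_insert_self m S)
      simp only [Finset.sum_insert hm, h]
      generalize P.coeff m = q
      generalize m 0 = i at hle
      generalize m 1 = j at hle
      have hi : i ≤ 2 := by omega
      have hj : j ≤ 2 := by omega
      interval_cases i <;> interval_cases j <;> try omega
      · exact ⟨a, b, c, d, e, f + q, fun x y => by ring⟩
      · exact ⟨a, b, c, d, e + q, f, fun x y => by ring⟩
      · exact ⟨a, b, c + q, d, e, f, fun x y => by ring⟩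
      · exact ⟨a, b, c, d + q, e, f, fun x y => by ring⟩
      · exact ⟨a, b + q, c, d, e, f, fun x y => by ring⟩
      · exact ⟨a + q, b, c, d, e, f, fun x y => by ring⟩
  obtain ⟨a, b, c, d, e, f, h⟩ := key P.support (by
    intro m hm
    have := (MvPolynomial.le_totalDegree hm).trans hdeg
    rwa [Finsupp.sum_fintype _ _ (fun _ => rfl), Fin.sum_univ_two] at this)
  refine ⟨a, b, c, d, e, f, fun x y => ?_⟩
  rw [MvPolynomial.eval_eq', ← h]
  simp [Fin.prod_univ_two]

lemma lattice_false {α : ℝ} (hα : 0 < α) (hirr : Irrational α) {A B C D E F : ℤ}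
    {p : ℤ → ℤ → ℝ} (hp : ∀ x y, 2 * p x y = (quad A B C D E F x y : ℝ))
    (hnat : ∀ x y, InSec α x y → ∃ k : ℕ, p x y = k)
    (hinj : ∀ x y x' y', InSec α x y → InSec α x' y' → p x y = p x' y' → x = x' ∧ y = y')
    (hsurj : ∀ k : ℕ, ∃ x y, InSec α x y ∧ p x y = k) : False := by
  have hinj' : ∀ x y x' y', InSec α x y → InSec α x' y' →
      quad A B C D E F x y = quad A B C D E F x' y' → x = x' ∧ y = y' := by
    intro x y x' y' h h' he
    refine hinj _ _ _ _ h h' ?_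
    have h1 := hp x y
    rw [he, ← hp] at h1
    linarith
  by_cases hΔ : A * C - B ^ 2 = 0
  swap
  · exact nondegenerate_false hα hinj' hΔ

  -- non-negativity on the ray `y = 0`
  have hA0 : 0 ≤ A := by
    have : -(A : ℝ) ≤ 0 := by
      apply le_zero_of_quadratic_le (c := |(D : ℝ)| + |(F : ℝ)|)
      refine ⟨0, fun T _ => ?_⟩
      obtain ⟨k, hk⟩ := hnat T 0 ⟨by simp, by push_cast; positivity⟩
      have h := hp T 0
      rw [hk] at h
      unfold quad at h
      push_cast at h
      have hT : (0 : ℝ) ≤ T := by positivity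
      have hk0 : (0 : ℝ) ≤ k := by positivity
      nlinarith [mul_le_mul_of_nonneg_right (le_abs_self (D : ℝ)) hT, le_abs_self (F : ℝ),
        mul_nonneg (abs_nonneg (F : ℝ)) hT, abs_nonneg (D : ℝ)]
    have : (0 : ℝ) ≤ A := by linarith
    exact_mod_cast this
  rcases hA0.eq_or_lt with hA | hA
  · have hB : B = 0 := by
      rw [← hA] at hΔ
      simpa using hΔ
    exact kernel_false hα hinj' (k₁ := 1) (k₂ := 0) ⟨by simp, by simpa using hα.le⟩ one_ne_zero
      (by simp [← hA]) (by simp [hB])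
  · have hAR : (0 : ℝ) < A := by exact_mod_cast hA
    by_cases hAB : 0 < (A : ℝ) + α * B
    · exact parabolic_false hα hirr hp hnat hinj hsurj hΔ hA hAB
    · push Not at hAB
      refine kernel_false hα hinj' (k₁ := -B) (k₂ := A) ⟨hAR.le, by push_cast; linarith⟩ ?_
        (by ring) (by linear_combination hΔ)
      intro h
      have : B = 0 := by linarith
      rw [this] at hAB
      simp at hAB
      linarith

end SectorPacking

open SectorPacking in
/-- There is no quadratic packing polynomial on an irrational sector `S(α)`:
no polynomial of total degree 2 restricts to a bijection from the integer
lattice points of `S(α)` onto the non-negative integers. -/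
theorem no_quadratic_packing_polynomial_on_irrational_sector
    (α : ℝ) (hα : 0 < α) (hirr : Irrational α)
    (P : MvPolynomial (Fin 2) ℝ) (hdeg : P.totalDegree = 2) :
    ¬ Set.BijOn (fun z : ℝ × ℝ => MvPolynomial.eval ![z.1, z.2] P)
        {z : ℝ × ℝ | (0 ≤ z.2 ∧ z.2 ≤ α * z.1) ∧ ∃ m n : ℤ, z.1 = m ∧ z.2 = n}
        {x : ℝ | ∃ k : ℕ, x = k} := by
  rintro ⟨hmaps, hinj, hsurj⟩
  obtain ⟨a, b, c, d, e, f, hP⟩ := eval_quadratic P hdeg.le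
  obtain ⟨p, hp₀⟩ : ∃ p : ℤ → ℤ → ℝ, ∀ x y : ℤ,
      p x y = MvPolynomial.eval ![(x : ℝ), (y : ℝ)] P := ⟨_, fun _ _ => rfl⟩
  have hmem : ∀ x y : ℤ, InSec α x y → ((x : ℝ), (y : ℝ)) ∈
      {z : ℝ × ℝ | (0 ≤ z.2 ∧ z.2 ≤ α * z.1) ∧ ∃ m n : ℤ, z.1 = m ∧ z.2 = n} :=
    fun x y h => ⟨h, x, y, rfl, rfl⟩
  have hnat : ∀ x y, InSec α x y → ∃ k : ℕ, p x y = k := by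
    intro x y h
    obtain ⟨k, hk⟩ := hmaps (hmem x y h)
    exact ⟨k, (hp₀ x y).trans hk⟩
  obtain ⟨A, B, C, D, E, F, hp⟩ := integrality hα (fun x y => (hp₀ x y).trans (hP x y)) hnat
  refine lattice_false hα hirr hp hnat ?_ ?_
  · intro x y x' y' h h' he
    rw [hp₀, hp₀] at he
    have := hinj (hmem x y h) (hmem x' y' h') he
    simpa only [Prod.mk.injEq, Int.cast_inj] using this
  · intro k
    obtain ⟨⟨x, y⟩, ⟨hs, m, n, hm, hn⟩, hk⟩ := hsurj ⟨k, rfl⟩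
    simp only at hm hn hk hs
    subst hm hn
    exact ⟨m, n, hs, (hp₀ m n).trans hk⟩
end

section
/- Suppose P(x,y) = A·x(x−1)/2 + B·xy + C·y(y−1)/2 + D·x + E·y + F with A,B,C,D,E,F ∈ ℤ is a quadratic packing polynomial on the sector S(α) for some α > 0. Then α = A/(1−B); in particular α is rational. -/
/-!
The argument compares the number of lattice points of the sector with values at most `n`, which is
exactly `n + 1`, with what the shape of the polynomial predicts.

*Positivity.* If the quadratic form `A x² + 2 B x y + C y²` were nonpositive on some ray of the
closed sector, the polynomial would grow at most linearly along the lines parallel to that ray. The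
numbers of lattice points with value at most `n` on these lines add up to a harmonic series times
`n`, too many for an injection into `ℕ` (`Packs.form_pos`).

*Degeneracy.* As the form is positive, `P (m w + u) ≈ m² P w`, so every class `u` mod `m` contains
asymptotically at least `n / m²` points with value at most `n`, up to a factor close to `1`. Only
about `n / m` integers up to `n` lie in a given residue class mod `m`, so at most `m` classes of
arguments can be sent to the same class of values (`Packs.equidistributed`). A nondegenerate
quadratic polynomial violates this for a modulus `m` at which the form is hyperbolic: a pair of
crossing lines mod `m` has more than `m` points. Such a modulus is given by an explicit formula, so
`A C = B²` (`Packs.disc_eq_zero`).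

*Slope.* Now `2 A P = (A x + B y)² + O(x)`, and the points with value at most `n` essentially fill
the triangle `0 ≤ y ≤ α x`, `A x + B y ≤ √(2 A n)`, of area `n α / (A + B α)`. This area must be
asymptotic to `n`, so `A + B α = α` (`Packs.slope_eq`).
-/

/-! ### Doubled quadratic polynomials on lattice points of a sector -/

/-- The lattice points `(x, y)` of the sector `S(α)`. -/
def InSector (α : ℝ) (x y : ℤ) : Prop := 0 ≤ y ∧ (y : ℝ) ≤ α * x

/-- Twice the quadratic polynomial with coefficients `A, …, F`. The factor `2` clears the
denominators, so that the values and all congruences live in `ℤ`. -/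
def dbl (A B C D E F x y : ℤ) : ℤ :=
  A * x * (x - 1) + 2 * B * x * y + C * y * (y - 1) + 2 * D * x + 2 * E * y + 2 * F

/-- The polynomial `dbl / 2` maps the lattice points of `S(α)` bijectively onto `ℕ`. -/
structure Packs (α : ℝ) (A B C D E F : ℤ) : Prop where
  val : ∀ x y, InSector α x y → ∃ k : ℕ, dbl A B C D E F x y = 2 * k
  inj : ∀ x y x' y', InSector α x y → InSector α x' y' →
    dbl A B C D E F x y = dbl A B C D E F x' y' → x = x' ∧ y = y'
  surj : ∀ k : ℕ, ∃ x y, InSector α x y ∧ dbl A B C D E F x y = 2 * k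

lemma InSector.x_nonneg {α : ℝ} (hα : 0 < α) {x y : ℤ} (h : InSector α x y) : 0 ≤ (x : ℝ) := by
  have h1 : (0 : ℝ) ≤ y := by exact_mod_cast h.1
  exact nonneg_of_mul_nonneg_right (h1.trans h.2) hα

/-! ### Positivity of the quadratic form -/

/-- Near the ray of slope `t` there are, for every large `x`, `J` lattice points of the sector in
the column of `x`, the `k`-th one within `k + 1` of the ray. -/
lemma exists_near_ray {α t : ℝ} (hα : 0 < α) (ht0 : 0 ≤ t) (htα : t ≤ α) (J : ℕ) :
    ∃ (Y : ℤ → ℕ → ℤ) (X : ℕ), (∀ x k l, Y x k = Y x l → k = l) ∧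
      ∀ x : ℤ, (X : ℤ) ≤ x → ∀ k < J, InSector α x (Y x k) ∧ |(Y x k : ℝ) - t * x| ≤ k + 1 := by
  rcases htα.lt_or_eq with hlt | rfl
  · obtain ⟨X, hX⟩ := exists_nat_ge ((J : ℝ) / (α - t))
    refine ⟨fun x k => ⌈t * x⌉ + k, X, fun x k l h => by simpa using h, fun x hx k hk => ?_⟩
    have hx' : (X : ℝ) ≤ x := by exact_mod_cast hx
    have hx0 : (0 : ℝ) ≤ x := le_trans (Nat.cast_nonneg _) hx'
    have hk' : (k : ℝ) + 1 ≤ J := by exact_mod_cast hk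
    rw [div_le_iff₀ (by linarith)] at hX
    have h1 := Int.le_ceil (t * x)
    have h2 := Int.ceil_lt_add_one (t * x)
    have h3 : (X : ℝ) * (α - t) ≤ x * (α - t) := mul_le_mul_of_nonneg_right hx' (by linarith)
    have h4 : 0 ≤ ⌈t * x⌉ := Int.ceil_nonneg (by positivity)
    have h5 : (0 : ℝ) ≤ k := Nat.cast_nonneg _
    refine ⟨⟨by positivity, ?_⟩, ?_⟩
    · push_cast; linarith
    · push_cast; rw [abs_le]; constructor <;> linarith
  · obtain ⟨X, hX⟩ := exists_nat_ge ((J : ℝ) / t)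
    refine ⟨fun x k => ⌊t * x⌋ - k, X, fun x k l h => by simpa using h, fun x hx k hk => ?_⟩
    have hx' : (X : ℝ) ≤ x := by exact_mod_cast hx
    have hk' : (k : ℝ) + 1 ≤ J := by exact_mod_cast hk
    rw [div_le_iff₀ hα] at hX
    have h1 := Int.floor_le (t * x)
    have h2 := Int.lt_floor_add_one (t * x)
    have h3 : (X : ℝ) * t ≤ x * t := mul_le_mul_of_nonneg_right hx' hα.le
    have h5 : (0 : ℝ) ≤ k := Nat.cast_nonneg _
    refine ⟨⟨?_, ?_⟩, ?_⟩
    · have : ((k : ℤ) : ℝ) ≤ t * x := by push_cast; linarith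
      have := Int.le_floor.2 this
      linarith
    · push_cast; linarith
    · push_cast; rw [abs_le]; constructor <;> linarith

/-- If the quadratic form is nonpositive on the ray of slope `t`, then the polynomial grows at most
linearly along lines parallel to it. -/
lemma dbl_le_near_ray (A B C D E F : ℤ) {t : ℝ} (ht0 : 0 ≤ t)
    (hq : (A : ℝ) + 2 * B * t + C * t ^ 2 ≤ 0) :
    ∃ K : ℝ, 0 < K ∧ ∀ (x y : ℤ) (κ : ℝ), 1 ≤ κ → κ ≤ x → |(y : ℝ) - t * x| ≤ κ →
      (dbl A B C D E F x y : ℝ) ≤ K * κ * x := by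
  refine ⟨2 * |B + C * t| + |(C : ℝ)| + |2 * (D : ℝ) - A| + |2 * (E : ℝ) - C| * (t + 1)
    + 2 * |(F : ℝ)| + 1, by positivity, fun x y κ h1 hκ he => ?_⟩
  set e : ℝ := y - t * x with he_def
  have hy : (y : ℝ) = t * x + e := by rw [he_def]; ring
  have hx1 : (1 : ℝ) ≤ x := h1.trans hκ
  have hxκ : (x : ℝ) ≤ κ * x := by nlinarith
  have hV : (dbl A B C D E F x y : ℝ) = (A + 2 * B * t + C * t ^ 2) * (x : ℝ) ^ 2
      + 2 * ((B + C * t) * e * x) + C * e ^ 2 + (2 * D - A) * x + (2 * E - C) * (t * x + e)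
      + 2 * F := by
    simp only [dbl]; push_cast; rw [hy]; ring
  have b0 : ((A : ℝ) + 2 * B * t + C * t ^ 2) * (x : ℝ) ^ 2 ≤ 0 :=
    mul_nonpos_of_nonpos_of_nonneg hq (sq_nonneg _)
  have b1 : (B + C * t) * e * x ≤ |B + C * t| * (κ * x) := by
    rw [← mul_assoc]
    refine mul_le_mul_of_nonneg_right ?_ (by linarith)
    refine (le_abs_self _).trans ?_
    rw [abs_mul]
    exact mul_le_mul_of_nonneg_left he (abs_nonneg _)
  have b2 : C * e ^ 2 ≤ |(C : ℝ)| * (κ * x) := by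
    have : e ^ 2 ≤ κ * x := by
      rw [← sq_abs]; nlinarith [abs_nonneg e]
    exact (mul_le_mul_of_nonneg_right (le_abs_self _) (sq_nonneg _)).trans
      (mul_le_mul_of_nonneg_left this (abs_nonneg _))
  have b3 : (2 * D - A) * (x : ℝ) ≤ |2 * (D : ℝ) - A| * (κ * x) :=
    (mul_le_mul_of_nonneg_right (le_abs_self _) (by linarith)).trans
      (mul_le_mul_of_nonneg_left hxκ (abs_nonneg _))
  have b4 : (2 * E - C) * (t * x + e) ≤ |2 * (E : ℝ) - C| * ((t + 1) * (κ * x)) := by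
    refine (le_abs_self _).trans ?_
    rw [abs_mul]
    refine mul_le_mul_of_nonneg_left ?_ (abs_nonneg _)
    have := abs_add_le (t * x) e
    rw [abs_of_nonneg (by positivity : 0 ≤ t * (x : ℝ))] at this
    nlinarith
  have b5 : (F : ℝ) ≤ |(F : ℝ)| * (κ * x) := by
    nlinarith [le_abs_self (F : ℝ), abs_nonneg (F : ℝ)]
  rw [hV]
  nlinarith

/-- The quadratic form is positive on the closed sector. Otherwise, along `J` parallel lines the
(doubled) values on the `k`-th line are at most `K (k + 1) x`, so that for large `n` about
`(1 + 1/2 + ⋯ + 1/J) n` lattice points have values at most about `K n / 2`; the divergence of the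
harmonic series contradicts injectivity. -/
lemma Packs.form_pos {α : ℝ} (hα : 0 < α) {A B C D E F : ℤ} (h : Packs α A B C D E F)
    {t : ℝ} (ht0 : 0 ≤ t) (htα : t ≤ α) : 0 < (A : ℝ) + 2 * B * t + C * t ^ 2 := by
  by_contra! hq
  obtain ⟨K, hK, hbound⟩ := dbl_le_near_ray A B C D E F ht0 hq
  obtain ⟨J, hJ⟩ := (Real.tendsto_sum_range_one_div_nat_succ_atTop.eventually_ge_atTop
    (K + 1)).exists
  obtain ⟨Y, X, hYinj, hY⟩ := exists_near_ray hα ht0 htα J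
  set X1 : ℕ := X + J + 1 with hX1
  have key : ∀ n : ℕ, (n : ℝ) * (K + 1) - J ≤ K * (J * X1 + n) + 1 := by
    intro n
    set Z : ℕ := ⌊K * (J * X1 + n)⌋₊ with hZ
    have hsec : ∀ k < J, ∀ i : ℕ, InSector α ((X1 + i : ℕ) : ℤ) (Y ((X1 + i : ℕ) : ℤ) k) :=
      fun k hk i => (hY _ (by push_cast; omega) k hk).1
    have hcard : (Finset.sigma (Finset.range J) (fun k => Finset.range (n / (k + 1)))).card
        ≤ (Finset.range (Z + 1)).card := by
      refine Finset.card_le_card_of_injOn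
        (fun z => (dbl A B C D E F ((X1 + z.2 : ℕ) : ℤ) (Y ((X1 + z.2 : ℕ) : ℤ) z.1) / 2).toNat)
        ?_ ?_
      · rintro ⟨k, i⟩ hz
        simp only [Finset.coe_sigma, Set.mem_sigma_iff, Finset.mem_coe, Finset.mem_range] at hz
        obtain ⟨hk, hi⟩ := hz
        obtain ⟨v, hv⟩ := h.val _ _ (hsec k hk i)
        simp only [hv, Finset.mem_coe, Finset.mem_range]
        have hk' : (k : ℝ) + 1 ≤ J := by exact_mod_cast hk
        have hb := hbound _ _ ((k : ℝ) + 1) (by linarith [(Nat.cast_nonneg k : (0 : ℝ) ≤ k)])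
          (by rw [hX1]; push_cast
              linarith [(Nat.cast_nonneg i : (0 : ℝ) ≤ i), (Nat.cast_nonneg X : (0 : ℝ) ≤ X)])
          (hY ((X1 + i : ℕ) : ℤ) (by push_cast; omega) k hk).2
        rw [hv] at hb
        have hi' : ((k : ℝ) + 1) * i ≤ n := by
          have : (k + 1) * i ≤ n :=
            (Nat.mul_le_mul_left _ hi.le).trans (Nat.mul_div_le n (k + 1))
          exact_mod_cast this
        have hv2 : (v : ℝ) ≤ K * (J * X1 + n) := by
          push_cast at hb
          have e1 : K * (k + 1) * ((X1 : ℝ) + i) = K * ((k + 1) * X1 + (k + 1) * i) := by ring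
          have e2 : ((k : ℝ) + 1) * X1 ≤ J * X1 :=
            mul_le_mul_of_nonneg_right hk' (Nat.cast_nonneg _)
          have e3 := mul_le_mul_of_nonneg_left (add_le_add e2 hi') hK.le
          linarith [(Nat.cast_nonneg v : (0 : ℝ) ≤ v)]
        have := Nat.le_floor hv2
        rw [← hZ] at this
        omega
      · rintro ⟨k, i⟩ hz ⟨k', i'⟩ hz' heq
        simp only [Finset.coe_sigma, Set.mem_sigma_iff, Finset.mem_coe, Finset.mem_range] at hz hz'
        obtain ⟨v, hv⟩ := h.val _ _ (hsec k hz.1 i)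
        obtain ⟨v', hv'⟩ := h.val _ _ (hsec k' hz'.1 i')
        simp only [hv, hv'] at heq
        have hvv : v = v' := by omega
        obtain ⟨e1, e2⟩ := h.inj _ _ _ _ (hsec k hz.1 i) (hsec k' hz'.1 i')
          (by rw [hv, hv', hvv])
        have e3 : i = i' := by omega
        subst e3
        have e4 := hYinj _ _ _ e2
        subst e4
        rfl
    rw [Finset.card_sigma, Finset.card_range] at hcard
    simp only [Finset.card_range] at hcard
    have hcard' : (∑ k ∈ Finset.range J, ((n / (k + 1) : ℕ) : ℝ)) ≤ Z + 1 := by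
      exact_mod_cast hcard
    have hZle : (Z : ℝ) ≤ K * (J * X1 + n) := Nat.floor_le (by positivity)
    have hsum : (n : ℝ) * (∑ k ∈ Finset.range J, 1 / ((k : ℝ) + 1)) - J
        ≤ ∑ k ∈ Finset.range J, ((n / (k + 1) : ℕ) : ℝ) := by
      have : (n : ℝ) * (∑ k ∈ Finset.range J, 1 / ((k : ℝ) + 1)) - J
          = ∑ k ∈ Finset.range J, ((n : ℝ) * (1 / ((k : ℝ) + 1)) - 1) := by
        rw [Finset.sum_sub_distrib, Finset.mul_sum]; simp
      rw [this]
      refine Finset.sum_le_sum fun k _ => ?_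
      have hlt : n < (n / (k + 1) + 1) * (k + 1) := by
        rw [mul_comm]; exact Nat.lt_mul_div_succ n (Nat.succ_pos k)
      have hlt' : (n : ℝ) < ((n / (k + 1) : ℕ) + 1) * ((k : ℝ) + 1) := by exact_mod_cast hlt
      have hk0 : (0 : ℝ) < (k : ℝ) + 1 := by positivity
      have := (div_lt_iff₀ hk0).2 hlt'
      rw [mul_one_div]
      linarith
    have := mul_le_mul_of_nonneg_left hJ (Nat.cast_nonneg n : (0 : ℝ) ≤ n)
    linarith
  obtain ⟨n, hn⟩ := exists_nat_gt (K * (J * X1) + 1 + J)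
  have := key n
  nlinarith

lemma Packs.exists_lower {α : ℝ} (hα : 0 < α) {A B C D E F : ℤ} (h : Packs α A B C D E F) :
    ∃ δ K : ℝ, 0 < δ ∧ 0 ≤ K ∧ ∀ x y, InSector α x y →
      δ * (x : ℝ) ^ 2 - K * x - K ≤ dbl A B C D E F x y := by
  obtain ⟨t, ht, hmin⟩ := isCompact_Icc.exists_isMinOn (Set.nonempty_Icc.2 hα.le)
    (f := fun t : ℝ => (A : ℝ) + 2 * B * t + C * t ^ 2) (by fun_prop)
  refine ⟨_, |2 * (D : ℝ) - A| + α * |2 * (E : ℝ) - C| + 2 * |(F : ℝ)|,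
    h.form_pos hα ht.1 ht.2, by positivity, fun x y hxy => ?_⟩
  set δ := (A : ℝ) + 2 * B * t + C * t ^ 2
  have hx := hxy.x_nonneg hα
  have hy : (0 : ℝ) ≤ y := by exact_mod_cast hxy.1
  have hyx := hxy.2
  have hform : δ * (x : ℝ) ^ 2 ≤ A * (x : ℝ) ^ 2 + 2 * B * x * y + C * (y : ℝ) ^ 2 := by
    rcases hx.eq_or_lt with h0 | hpos
    · have : (y : ℝ) = 0 := by rw [← h0] at hyx; linarith
      rw [this, ← h0]; simp
    · have := isMinOn_iff.1 hmin ((y : ℝ) / x) ⟨by positivity, by rwa [div_le_iff₀ hpos]⟩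
      have := mul_le_mul_of_nonneg_right this (sq_nonneg (x : ℝ))
      refine this.trans (le_of_eq ?_)
      field_simp
  have hV : (dbl A B C D E F x y : ℝ) = A * (x : ℝ) ^ 2 + 2 * B * x * y + C * (y : ℝ) ^ 2
      + (2 * D - A) * x + (2 * E - C) * y + 2 * F := by
    simp only [dbl]; push_cast; ring
  have b1 : -|2 * (D : ℝ) - A| * x ≤ (2 * D - A) * x :=
    mul_le_mul_of_nonneg_right (neg_abs_le _) hx
  have b2 : -|2 * (E : ℝ) - C| * y ≤ (2 * E - C) * y :=
    mul_le_mul_of_nonneg_right (neg_abs_le _) hy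
  have b3 : |2 * (E : ℝ) - C| * y ≤ |2 * (E : ℝ) - C| * (α * x) :=
    mul_le_mul_of_nonneg_left hyx (abs_nonneg _)
  have b4 := neg_abs_le (F : ℝ)
  rw [hV]
  have : 0 ≤ |(F : ℝ)| * x := by positivity
  nlinarith [abs_nonneg (2 * (D : ℝ) - A), mul_nonneg hα.le (abs_nonneg (2 * (E : ℝ) - C))]

/-! ### Equidistribution and the vanishing of the discriminant -/

/-- Substituting `m w + u` for `w` multiplies the values by `m²`, up to an arbitrarily small
proportion (here `1 / (2 m)`) and an additive constant. -/
lemma Packs.exists_scale {α : ℝ} (hα : 0 < α) {A B C D E F : ℤ} (h : Packs α A B C D E F)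
    {m : ℕ} (hm : 0 < m) (a b : ℤ) :
    ∃ K : ℝ, ∀ x y, InSector α x y →
      (dbl A B C D E F (a + m * x) (b + m * y) : ℝ)
        ≤ ((m : ℝ) ^ 2 + m / 2) * dbl A B C D E F x y + K := by
  obtain ⟨δ, K0, hδ, hK0, hlow⟩ := h.exists_lower hα
  have hm' : (0 : ℝ) < m := by exact_mod_cast hm
  set c1 : ℝ := m * (2 * A * a + 2 * B * b + (2 * D - A)) - (m : ℝ) ^ 2 * (2 * D - A) with hc1
  set c2 : ℝ := m * (2 * B * a + 2 * C * b + (2 * E - C)) - (m : ℝ) ^ 2 * (2 * E - C) with hc2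
  set c3 : ℝ := dbl A B C D E F a b - (m : ℝ) ^ 2 * (2 * F) with hc3
  set L : ℝ := |c1| + |c2| * α + m / 2 * K0 with hL
  refine ⟨c3 + m / 2 * K0 + L ^ 2 / (2 * m * δ), fun x y hxy => ?_⟩
  have hx := hxy.x_nonneg hα
  have hy : (0 : ℝ) ≤ y := by exact_mod_cast hxy.1
  have hyx := hxy.2
  have hV : (dbl A B C D E F (a + m * x) (b + m * y) : ℝ)
      = (m : ℝ) ^ 2 * dbl A B C D E F x y + c1 * x + c2 * y + c3 := by
    rw [hc1, hc2, hc3]; simp only [dbl]; push_cast; ring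
  have b1 : c1 * x ≤ |c1| * x := mul_le_mul_of_nonneg_right (le_abs_self _) hx
  have b2 : c2 * y ≤ |c2| * (α * x) :=
    (mul_le_mul_of_nonneg_right (le_abs_self _) hy).trans
      (mul_le_mul_of_nonneg_left hyx (abs_nonneg _))
  have b3 := mul_le_mul_of_nonneg_left (hlow x y hxy) (by positivity : 0 ≤ (m : ℝ) / 2)
  have b4 : L * x ≤ m / 2 * δ * (x : ℝ) ^ 2 + L ^ 2 / (2 * m * δ) := by
    have : m / 2 * δ * (x : ℝ) ^ 2 + L ^ 2 / (2 * m * δ) - L * x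
        = (m * δ * x - L) ^ 2 / (2 * m * δ) := by field_simp; ring
    have h2 : 0 ≤ (m * δ * x - L) ^ 2 / (2 * m * δ) := by positivity
    linarith
  have b5 : L * x = |c1| * x + |c2| * (α * x) + m / 2 * K0 * x := by rw [hL]; ring
  rw [hV]
  linarith

lemma exists_rep_inSector {α : ℝ} (hα : 0 < α) {m : ℕ} (hm : 0 < m) (a b : ℤ) :
    ∃ x y : ℤ, InSector α x y ∧ x ≡ a [ZMOD m] ∧ y ≡ b [ZMOD m] := by
  obtain ⟨N, hN⟩ := exists_nat_ge (((b % m : ℤ) : ℝ) / α - a)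
  have hm' : (1 : ℝ) ≤ m := by exact_mod_cast hm
  refine ⟨a + m * N, b % m, ⟨Int.emod_nonneg _ (by omega), ?_⟩, ?_, Int.mod_modEq _ _⟩
  · have h1 : (N : ℝ) ≤ m * N := by nlinarith [(Nat.cast_nonneg N : (0 : ℝ) ≤ N)]
    have h2 : ((b % m : ℤ) : ℝ) / α ≤ a + m * N := by linarith
    rw [div_le_iff₀ hα] at h2
    push_cast at h2 ⊢
    linarith
  · simp [Int.ModEq]

/-- Equidistribution: for odd `m` no residue class of values mod `m` is attained by more than `m`
residue classes of arguments mod `m`. Each class of arguments contains, up to a bounded error, at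
least `n / (m² + m / 2)` points with value at most `n`, and only about `n / m` values are
available. -/
lemma Packs.equidistributed {α : ℝ} (hα : 0 < α) {A B C D E F : ℤ} (h : Packs α A B C D E F)
    {m : ℕ} (hm : Odd m) (a b : ℕ → ℤ)
    (hinj : ∀ i ≤ m, ∀ j ≤ m, a i ≡ a j [ZMOD m] → b i ≡ b j [ZMOD m] → i = j)
    (hval : ∀ i ≤ m, dbl A B C D E F (a i) (b i) ≡ dbl A B C D E F (a 0) (b 0) [ZMOD m]) :
    False := by
  have hm0 : 0 < m := hm.pos
  have hmr : (0 : ℝ) < m := by exact_mod_cast hm0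
  choose x y hxy hxa hyb using fun i => exists_rep_inSector hα hm0 (a i) (b i)
  choose K hK using fun i => h.exists_scale hα hm0 (x i) (y i)
  choose gx gy hg hgv using h.surj
  have hsec : ∀ i k, InSector α (x i + m * gx k) (y i + m * gy k) := by
    intro i k
    have h1 := (hg k).1
    have h2 := (hxy i).1
    refine ⟨by positivity, ?_⟩
    push_cast
    have h3 := (hg k).2
    have h4 := (hxy i).2
    nlinarith
  choose v hv using fun i k => h.val _ _ (hsec i k)
  obtain ⟨K', hK'⟩ : ∃ K' : ℝ, ∀ i ≤ m, K i ≤ K' :=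
    ⟨∑ i ∈ Finset.range (m + 1), |K i|, fun i hi => (le_abs_self _).trans
      (Finset.single_le_sum (f := fun i => |K i|) (fun _ _ => abs_nonneg _)
        (Finset.mem_range.2 (Nat.lt_succ_of_le hi)))⟩
  have hvmod : ∀ i ≤ m, ∀ j ≤ m, ∀ k l, (v i k) % m = (v j l) % m := by
    have base : ∀ i ≤ m, ∀ k, (2 * (v i k : ℤ)) ≡ dbl A B C D E F (a 0) (b 0) [ZMOD m] := by
      intro i hi k
      rw [← hv]
      refine Int.ModEq.trans ?_ (hval i hi)
      have e1 : x i + m * gx k ≡ a i [ZMOD m] := by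
        refine Int.ModEq.trans ?_ (hxa i); simp [Int.ModEq]
      have e2 : y i + m * gy k ≡ b i [ZMOD m] := by
        refine Int.ModEq.trans ?_ (hyb i); simp [Int.ModEq]
      simp only [dbl]
      gcongr
    intro i hi j hj k l
    have e : (2 * (v i k : ℤ)) ≡ 2 * (v j l : ℤ) [ZMOD m] := (base i hi k).trans (base j hj l).symm
    have e' : 2 * v i k ≡ 2 * v j l [MOD m] := by
      rw [← Int.natCast_modEq_iff]; exact_mod_cast e
    exact Nat.ModEq.cancel_left_of_coprime (Nat.coprime_two_right.2 hm) e'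
  have hvb : ∀ i ≤ m, ∀ k n : ℕ, k ≤ n → (v i k : ℝ) ≤ m * ((m + 1 / 2) * n + |K'|) := by
    intro i hi k n hkn
    have h1 := hK i _ _ (hg k)
    rw [hv, hgv] at h1
    push_cast at h1
    have h2 : (k : ℝ) ≤ n := by exact_mod_cast hkn
    have h3 := hK' i hi
    have h4 := le_abs_self K'
    have h5 : (1 : ℝ) ≤ m := by exact_mod_cast hm0
    have h6 : ((m : ℝ) ^ 2 + m / 2) * k ≤ ((m : ℝ) ^ 2 + m / 2) * n :=
      mul_le_mul_of_nonneg_left h2 (by positivity)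
    nlinarith [abs_nonneg K']
  have key : ∀ n : ℕ, ((m : ℝ) + 1) * n ≤ (m + 1 / 2) * n + |K'| + 1 := by
    intro n
    set Z : ℕ := ⌊((m : ℝ) + 1 / 2) * n + |K'|⌋₊ with hZ
    have hcard : (Finset.range (m + 1) ×ˢ Finset.range n).card ≤ (Finset.range (Z + 1)).card := by
      refine Finset.card_le_card_of_injOn (fun z => v z.1 z.2 / m) ?_ ?_
      · rintro ⟨i, k⟩ hz
        simp only [Finset.coe_product, Set.mem_prod, Finset.mem_coe, Finset.mem_range] at hz
        simp only [Finset.mem_coe, Finset.mem_range]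
        refine Nat.lt_succ_of_le (Nat.le_floor ?_)
        have := hvb i (by omega) k n hz.2.le
        refine Nat.cast_div_le.trans ?_
        rw [div_le_iff₀ hmr]
        linarith
      · rintro ⟨i, k⟩ hz ⟨j, l⟩ hz' heq
        simp only [Finset.coe_product, Set.mem_prod, Finset.mem_coe, Finset.mem_range] at hz hz'
        simp only at heq
        have hmod := hvmod i (by omega) j (by omega) k l
        have hvv : v i k = v j l := by
          rw [← Nat.div_add_mod (v i k) m, ← Nat.div_add_mod (v j l) m, heq, hmod]
        obtain ⟨e1, e2⟩ := h.inj _ _ _ _ (hsec i k) (hsec j l) (by rw [hv, hv, hvv])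
        have hij : i = j := by
          refine hinj i (by omega) j (by omega) ?_ ?_
          · refine (hxa i).symm.trans (Int.ModEq.trans ?_ (hxa j))
            have := congrArg (· % (m : ℤ)) e1
            simpa [Int.ModEq] using this
          · refine (hyb i).symm.trans (Int.ModEq.trans ?_ (hyb j))
            have := congrArg (· % (m : ℤ)) e2
            simpa [Int.ModEq] using this
        subst hij
        have hmz : (m : ℤ) ≠ 0 := by exact_mod_cast hm0.ne'
        have f1 : gx k = gx l := mul_left_cancel₀ hmz (by linarith)
        have f2 : gy k = gy l := mul_left_cancel₀ hmz (by linarith)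
        have f3 := hgv k
        rw [f1, f2, hgv l] at f3
        have : k = l := by omega
        rw [this]
    rw [Finset.card_product, Finset.card_range, Finset.card_range, Finset.card_range] at hcard
    have hcard' : ((m : ℝ) + 1) * n ≤ Z + 1 := by exact_mod_cast hcard
    have hZle : (Z : ℝ) ≤ (m + 1 / 2) * n + |K'| := Nat.floor_le (by positivity)
    linarith
  obtain ⟨n, hn⟩ := exists_nat_gt (2 * (|K'| + 1))
  have := key n
  linarith

/-- The quadratic form is degenerate. Otherwise let `Δ = B² - A C`, `s = 2 A Δ` and
`M = 1 - Δ s²`. Modulo `M`, the numbers `2`, `A`, `Δ`, `s` are units and `Δ` is a square, so that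
the polynomial has a critical point `c` and the form has two independent isotropic vectors `d₁`,
`d₂`. The class of the value at `c` is attained at the `|M|` points `c + j d₁` and at `c + d₂`. -/
lemma Packs.disc_eq_zero {α : ℝ} (hα : 0 < α) {A B C D E F : ℤ} (h : Packs α A B C D E F) :
    A * C = B ^ 2 := by
  by_contra hne
  have hA : A ≠ 0 := by
    have := h.form_pos hα le_rfl hα.le
    intro h0
    simp [h0] at this
  obtain ⟨Δ, hΔ⟩ : ∃ Δ, Δ = B ^ 2 - A * C := ⟨_, rfl⟩
  have hΔ0 : Δ ≠ 0 := fun h0 => hne (by linarith)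
  obtain ⟨M, hM⟩ : ∃ M, M = 1 - 4 * A ^ 2 * Δ ^ 3 := ⟨_, rfl⟩
  have hodd : Odd M.natAbs := by
    rw [Int.natAbs_odd, hM]
    exact ⟨-(2 * A ^ 2 * Δ ^ 3), by ring⟩
  have hM1 : M.natAbs ≠ 1 := by
    intro h1
    have hz : A ^ 2 * Δ ^ 3 ≠ 0 := by positivity
    have : M = 1 ∨ M = -1 := Int.natAbs_eq_natAbs_iff.1 (by simpa using h1)
    rcases this with h2 | h2
    · exact hz (by linarith)
    · have : 2 * (A ^ 2 * Δ ^ 3) = 1 := by linarith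
      omega
  set l := 2 * D - A with hl
  set k := 2 * E - C with hk
  set x0 := (l * C - k * B) * (2 * A ^ 2 * Δ ^ 2) with hx0
  set y0 := (k * A - l * B) * (2 * A ^ 2 * Δ ^ 2) with hy0
  set s := 2 * A * Δ with hs
  have hval : ∀ (σ j : ℤ), σ ^ 2 = 1 →
      M ∣ dbl A B C D E F (x0 + j * (4 * A * Δ ^ 3 * (σ - B * s))) (y0 + j * s)
        - dbl A B C D E F x0 y0 := by
    intro σ j hσ
    refine ⟨j * (l * (4 * A * Δ ^ 3 * (σ - B * s)) + k * s)
      + j ^ 2 * (-(4 * A * Δ ^ 3) * (σ - B * s) ^ 2 + 4 * A * Δ ^ 3 + C * s ^ 2), ?_⟩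
    have gx : 2 * A * x0 + 2 * B * y0 + l = l * M := by
      rw [hx0, hy0, hM]; linear_combination (4 * A ^ 2 * Δ ^ 2 * l) * hΔ
    have gy : 2 * B * x0 + 2 * C * y0 + k = k * M := by
      rw [hx0, hy0, hM]; linear_combination (4 * A ^ 2 * Δ ^ 2 * k) * hΔ
    have gd : A * (4 * A * Δ ^ 3 * (σ - B * s)) ^ 2 + 2 * B * (4 * A * Δ ^ 3 * (σ - B * s)) * s
        + C * s ^ 2
        = M * (-(4 * A * Δ ^ 3) * (σ - B * s) ^ 2 + 4 * A * Δ ^ 3 + C * s ^ 2) := by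
      rw [hM, hs]
      linear_combination (4 * A * Δ ^ 3) * hσ + (16 * A ^ 3 * Δ ^ 5) * hΔ
    have expand : dbl A B C D E F (x0 + j * (4 * A * Δ ^ 3 * (σ - B * s))) (y0 + j * s)
        - dbl A B C D E F x0 y0
        = j * ((2 * A * x0 + 2 * B * y0 + l) * (4 * A * Δ ^ 3 * (σ - B * s))
            + (2 * B * x0 + 2 * C * y0 + k) * s)
          + j ^ 2 * (A * (4 * A * Δ ^ 3 * (σ - B * s)) ^ 2
            + 2 * B * (4 * A * Δ ^ 3 * (σ - B * s)) * s + C * s ^ 2) := by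
      rw [hl, hk]; simp only [dbl]; ring
    rw [expand, gx, gy, gd]; ring
  -- `2 A Δ² s ≡ 1` modulo `M`, so `s` cancels
  have hscancel : ∀ z : ℤ, M ∣ s * z → M ∣ z := by
    intro z hz
    have : z = M * z + (2 * A * Δ ^ 2) * (s * z) := by rw [hM, hs]; ring
    rw [this]
    exact dvd_add (dvd_mul_right _ _) (dvd_mul_of_dvd_right hz _)
  set m := M.natAbs with hm
  have hdvd : ∀ z : ℤ, (m : ℤ) ∣ z ↔ M ∣ z := fun z => by rw [hm]; exact Int.natAbs_dvd
  -- the two directions are `σ = 1` and `σ = -1`; the class with index `m` is `c + d₂`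
  let σ : ℕ → ℤ := fun i => if i < m then 1 else -1
  let τ : ℕ → ℤ := fun i => if i < m then i else 1
  have hσ2 : ∀ i, σ i ^ 2 = 1 := by intro i; simp only [σ]; split_ifs <;> norm_num
  refine h.equidistributed hα hodd (fun i => x0 + τ i * (4 * A * Δ ^ 3 * (σ i - B * s)))
    (fun i => y0 + τ i * s) ?_ ?_
  · intro i hi j hj hx hy
    rw [Int.modEq_iff_dvd, hdvd] at hx hy
    have hτ : M ∣ τ j - τ i := hscancel _ (by convert hy using 1; ring)
    have hcross : ∀ i : ℕ, M ∣ τ i - 1 → σ i = 1 → ¬ M ∣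
        (4 * A * Δ ^ 3 * (-1 - B * s)) - (τ i * (4 * A * Δ ^ 3 * (σ i - B * s))) := by
      intro i h1 h2 h3
      rw [h2] at h3
      have h4 : M ∣ 2 := by
        have e : (2 : ℤ) = M * 2 - A * ((4 * A * Δ ^ 3 * (-1 - B * s))
              - (τ i * (4 * A * Δ ^ 3 * (1 - B * s))))
            - (τ i - 1) * (A * (4 * A * Δ ^ 3 * (1 - B * s))) := by
          rw [hM]; ring
        rw [e]
        exact dvd_sub (dvd_sub (dvd_mul_right _ _) (dvd_mul_of_dvd_right h3 _))
          (dvd_mul_of_dvd_left h1 _)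
      have h5 : m ∣ 2 := by
        have := Int.natAbs_dvd_natAbs.2 h4
        simpa using this
      rcases (Nat.dvd_prime Nat.prime_two).1 h5 with h6 | h6
      · exact hM1 h6
      · rw [h6] at hodd; exact absurd hodd (by decide)
    rcases hi.lt_or_eq with hi' | hi' <;> rcases hj.lt_or_eq with hj' | hj'
    · simp only [τ, if_pos hi', if_pos hj'] at hτ
      rw [← hdvd] at hτ
      have := Int.modEq_iff_dvd.2 hτ
      rw [Int.natCast_modEq_iff] at this
      exact Nat.ModEq.eq_of_lt_of_lt this hi' hj'
    · exfalso
      have s1 : σ j = -1 := by simp [σ, hj']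
      have s2 : τ j = 1 := by simp [τ, hj']
      rw [s2] at hτ
      refine hcross i ((dvd_sub_comm).1 hτ) (by simp [σ, hi']) ?_
      rw [s1, s2] at hx
      convert hx using 1; ring
    · exfalso
      have s1 : σ i = -1 := by simp [σ, hi']
      have s2 : τ i = 1 := by simp [τ, hi']
      rw [s2] at hτ
      refine hcross j hτ (by simp [σ, hj']) ?_
      rw [s1, s2] at hx
      refine Int.dvd_neg.1 ?_
      convert hx using 1; ring
    · omega
  · intro i _
    refine Int.ModEq.symm (Int.modEq_iff_dvd.2 ?_)
    rw [hdvd]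
    have e1 := hval (σ 0) (τ 0) (hσ2 0)
    have e2 := hval (σ i) (τ i) (hσ2 i)
    convert Int.dvd_sub e2 e1 using 1
    ring

/-! ### Counting lattice points in a triangle -/

lemma nonpos_of_quadratic_le_linear {c K : ℝ} (h : ∀ n : ℕ, c * (n : ℝ) ^ 2 ≤ K * n + K) :
    c ≤ 0 := by
  by_contra! hc
  obtain ⟨n, hn⟩ := exists_nat_gt (2 * |K| / c + 1)
  have h1 := h n
  have hn1 : (1 : ℝ) < n := by
    have : 0 ≤ 2 * |K| / c := by positivity
    linarith
  have h2 : 2 * |K| < c * n := by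
    have : 2 * |K| / c < n := by linarith
    rw [div_lt_iff₀ hc] at this; linarith
  have h3 : K ≤ |K| := le_abs_self K
  nlinarith [abs_nonneg K]

/-- When the form is degenerate, `A` times twice the polynomial is the square of `A x + B y`, up to
a linear error. -/
lemma exists_square {α : ℝ} (hα : 0 < α) {A B C : ℤ} (D E F : ℤ)
    (hdisc : A * C = B ^ 2) (hA : (0 : ℝ) < A) (hend : (0 : ℝ) < A + B * α) :
    ∃ K : ℝ, 0 ≤ K ∧ ∀ x y, InSector α x y → (0 : ℝ) ≤ A * x + B * y ∧
      |(A : ℝ) * dbl A B C D E F x y - (A * x + B * y) ^ 2| ≤ K * (A * x + B * y + 1) := by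
  obtain ⟨μ, hμ, hμA, hμE⟩ : ∃ μ : ℝ, 0 < μ ∧ μ ≤ A ∧ μ ≤ A + B * α :=
    ⟨min A (A + B * α), lt_min hA hend, min_le_left _ _, min_le_right _ _⟩
  set K1 : ℝ := |(A : ℝ) * (2 * D - A)| + |(A : ℝ) * (2 * E - C)| * α with hK1
  have hK1n : 0 ≤ K1 := by positivity
  refine ⟨K1 / μ + |2 * (A : ℝ) * F|, by positivity, fun x y hxy => ?_⟩
  have hx := hxy.x_nonneg hα
  have hy : (0 : ℝ) ≤ y := by exact_mod_cast hxy.1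
  have hyx := hxy.2
  have hL : μ * x ≤ A * x + B * y := by
    rcases le_or_gt 0 (B : ℝ) with hB | hB <;> nlinarith
  have hL0 : (0 : ℝ) ≤ A * x + B * y := le_trans (by positivity) hL
  refine ⟨hL0, ?_⟩
  have hd : (A : ℝ) * C = (B : ℝ) ^ 2 := by exact_mod_cast hdisc
  have e : (A : ℝ) * dbl A B C D E F x y - (A * x + B * y) ^ 2
      = A * (2 * D - A) * x + A * (2 * E - C) * y + 2 * A * F := by
    simp only [dbl]; push_cast; linear_combination (y : ℝ) ^ 2 * hd
  rw [e]
  have h1 : K1 * x ≤ K1 / μ * (A * x + B * y) := by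
    have := mul_le_mul_of_nonneg_left hL (div_nonneg hK1n hμ.le)
    rwa [← mul_assoc, div_mul_cancel₀ _ hμ.ne'] at this
  have h2 := abs_add_three (A * (2 * D - A) * (x : ℝ)) (A * (2 * E - C) * y) (2 * A * F)
  rw [abs_mul _ (x : ℝ), abs_mul _ (y : ℝ), abs_of_nonneg hx, abs_of_nonneg hy] at h2
  have h3 := mul_le_mul_of_nonneg_left hyx (abs_nonneg (A * (2 * E - C) : ℝ))
  have h4 : 0 ≤ |2 * (A : ℝ) * F| * (A * x + B * y) := by positivity
  have h5 : 0 ≤ K1 / μ := by positivity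
  nlinarith

/-- The number of lattice points of a triangle of height `M` with horizontal base, whose row at
height `y` is the interval `[a y, b y]`, is its area up to an error linear in `M`. -/
lemma card_triangle_bounds (κ : ℝ) (hκ : 0 ≤ κ) (a b : ℕ → ℝ) (M : ℕ)
    (hab : ∀ y, b y - a y = κ * (M - y)) :
    κ * (M * (M + 1) / 2) - (M + 1)
        ≤ ((Finset.range (M + 1)).sigma (fun y => Finset.Icc ⌈a y⌉ ⌊b y⌋)).card ∧
      (((Finset.range (M + 1)).sigma (fun y => Finset.Icc ⌈a y⌉ ⌊b y⌋)).card : ℝ)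
        ≤ κ * (M * (M + 1) / 2) + (M + 1) := by
  have hsum : ∑ y ∈ Finset.range (M + 1), κ * ((M : ℝ) - y) = κ * (M * (M + 1) / 2) := by
    rw [← Finset.mul_sum]
    congr 1
    have : ∀ n : ℕ, ∑ y ∈ Finset.range n, (y : ℝ) = n * (n - 1) / 2 := by
      intro n
      induction n with
      | zero => simp
      | succ n ih => rw [Finset.sum_range_succ, ih]; push_cast; ring
    rw [Finset.sum_sub_distrib, this]
    simp
    ring
  have hone : ∑ _y ∈ Finset.range (M + 1), (1 : ℝ) = M + 1 := by simp
  rw [Finset.card_sigma]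
  push_cast
  rw [← hsum, ← hone, ← Finset.sum_sub_distrib, ← Finset.sum_add_distrib]
  constructor <;> refine Finset.sum_le_sum fun y hy => ?_
  · rw [Int.card_Icc, ← hab]
    have h1 : ((⌊b y⌋ + 1 - ⌈a y⌉ : ℤ) : ℝ) ≤ (((⌊b y⌋ + 1 - ⌈a y⌉).toNat : ℤ) : ℝ) := by
      exact_mod_cast Int.self_le_toNat _
    push_cast at h1
    have h2 := Int.lt_floor_add_one (b y)
    have h3 := Int.ceil_lt_add_one (a y)
    linarith
  · rw [Int.card_Icc]
    have hyM : (y : ℝ) ≤ M := by exact_mod_cast Nat.le_of_lt_succ (Finset.mem_range.1 hy)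
    have h0 : 0 ≤ κ * ((M : ℝ) - y) := mul_nonneg hκ (by linarith)
    have h2 := Int.floor_le (b y)
    have h3 := Int.le_ceil (a y)
    have hh := hab y
    rcases le_total 0 (⌊b y⌋ + 1 - ⌈a y⌉) with h | h
    · have : (((⌊b y⌋ + 1 - ⌈a y⌉).toNat : ℤ) : ℝ) = ((⌊b y⌋ + 1 - ⌈a y⌉ : ℤ) : ℝ) := by
        rw [Int.toNat_of_nonneg h]
      push_cast at this
      linarith
    · rw [Int.toNat_of_nonpos h]
      push_cast
      linarith

/-- The values up to `n` are essentially those taken on the triangle `A x + B y ≤ T` with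
`T² ≈ 2 A n`; comparing `n` with the area of this triangle yields the slope. -/
lemma Packs.slope_eq {α : ℝ} (hα : 0 < α) {A B C D E F : ℤ} (h : Packs α A B C D E F) :
    0 < (A : ℝ) ∧ (A : ℝ) + B * α = α := by
  have hdisc := h.disc_eq_zero hα
  have hd : (A : ℝ) * C = (B : ℝ) ^ 2 := by exact_mod_cast hdisc
  have hA : (0 : ℝ) < A := by simpa using h.form_pos hα le_rfl hα.le
  have hend : (0 : ℝ) < A + B * α := by
    by_contra! hneg
    have hB : (B : ℝ) < 0 := by
      by_contra! hB
      nlinarith [mul_nonneg hB hα.le]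
    have ht0 : 0 ≤ (A : ℝ) / -B := div_nonneg hA.le (by linarith)
    have htα : (A : ℝ) / -B ≤ α := by rw [div_le_iff₀ (by linarith)]; linarith
    have := mul_pos hA (h.form_pos hα ht0 htα)
    have e : (A : ℝ) * (A + 2 * B * (A / -B) + C * (A / -B) ^ 2) = (A + B * (A / -B)) ^ 2 := by
      linear_combination (A / -B : ℝ) ^ 2 * hd
    have e2 : (A : ℝ) + B * (A / -B) = 0 := by
      rw [div_neg, mul_neg, mul_div_cancel₀ _ hB.ne, add_neg_cancel]
    rw [e, e2] at this
    norm_num at this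
  refine ⟨hA, ?_⟩
  obtain ⟨K, hK, hsq⟩ := exists_square hα D E F hdisc hA hend
  choose gx gy hg hgv using h.surj
  obtain ⟨κ, hκ⟩ : ∃ κ : ℝ, κ = B / A + 1 / α := ⟨_, rfl⟩
  have hAκ : A * κ * α = A + B * α := by rw [hκ]; field_simp; ring
  have hκ0 : 0 < κ := by
    have : κ = (A + B * α) / (A * α) := by rw [hκ]; field_simp; ring
    rw [this]; positivity
  -- `T` is chosen so that the upper vertex of the triangle is at height exactly `M`
  have hab : ∀ (M y : ℕ), (A * κ * M - B * y) / A - (y : ℝ) / α = κ * (M - y) := by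
    intro M y; rw [hκ]; field_simp; ring
  have upper : κ - A * κ ^ 2 ≤ 0 := by
    refine nonpos_of_quadratic_le_linear (K := 2 * (3 + K * κ / 2 + K / (2 * A))) fun M => ?_
    obtain ⟨T, hT⟩ : ∃ T : ℝ, T = A * κ * M := ⟨_, rfl⟩
    have hT0 : 0 ≤ T := by rw [hT]; positivity
    have hlow := (card_triangle_bounds κ hκ0.le (fun y => (y : ℝ) / α)
      (fun y => (A * κ * M - B * y) / A) M (hab M)).1
    set S := (Finset.range (M + 1)).sigma
      (fun y : ℕ => Finset.Icc ⌈(y : ℝ) / α⌉ ⌊(A * κ * M - B * (y : ℝ)) / A⌋) with hS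
    have hmem : ∀ z ∈ S, InSector α z.2 (z.1 : ℤ) ∧ (A : ℝ) * z.2 + B * z.1 ≤ T := by
      rintro ⟨y, x⟩ hz
      simp only [hS, Finset.mem_sigma, Finset.mem_range, Finset.mem_Icc] at hz
      obtain ⟨-, h1, h2⟩ := hz
      have h1' := Int.ceil_le.1 h1
      have h2' := Int.le_floor.1 h2
      rw [div_le_iff₀ hα] at h1'
      rw [le_div_iff₀ hA] at h2'
      refine ⟨⟨by positivity, ?_⟩, ?_⟩
      · push_cast; linarith
      · rw [hT]; push_cast; linarith
    obtain ⟨U, hU⟩ : ∃ U : ℝ, U = (T ^ 2 + K * (T + 1)) / (2 * A) := ⟨_, rfl⟩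
    have hU0 : 0 ≤ U := by rw [hU]; positivity
    have hcard : S.card ≤ (Finset.range (⌊U⌋₊ + 1)).card := by
      refine Finset.card_le_card_of_injOn
        (fun z => (dbl A B C D E F z.2 z.1 / 2).toNat) ?_ ?_
      · intro z hz
        obtain ⟨h1, h2⟩ := hmem z hz
        obtain ⟨v, hv⟩ := h.val _ _ h1
        obtain ⟨h3, h4⟩ := hsq _ _ h1
        rw [hv] at h4
        have h5 := (abs_le.1 h4).2
        push_cast at h3 h5
        have : (v : ℝ) ≤ U := by
          rw [hU, le_div_iff₀ (by positivity)]
          nlinarith [mul_le_mul_of_nonneg_left h2 hK]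
        have := Nat.le_floor this
        simp only [hv, Finset.mem_coe, Finset.mem_range]
        omega
      · rintro ⟨y, x⟩ hz ⟨y', x'⟩ hz' heq
        have h1 := (hmem _ hz).1
        have h1' := (hmem _ hz').1
        obtain ⟨v, hv⟩ := h.val _ _ h1
        obtain ⟨v', hv'⟩ := h.val _ _ h1'
        simp only at hv hv' heq
        rw [hv, hv'] at heq
        have hvv : v = v' := by omega
        obtain ⟨e1, e2⟩ := h.inj _ _ _ _ h1 h1' (by simp only; rw [hv, hv', hvv])
        simp only at e1 e2
        have e3 : y = y' := by omega
        subst e1 e3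
        rfl
    rw [Finset.card_range] at hcard
    have hcard' : (S.card : ℝ) ≤ ⌊U⌋₊ + 1 := by exact_mod_cast hcard
    have hfl := Nat.floor_le hU0
    have hM : (0 : ℝ) ≤ M := Nat.cast_nonneg _
    have hUe : U = A * κ ^ 2 * M ^ 2 / 2 + K * κ / 2 * M + K / (2 * A) := by
      rw [hU, hT]; field_simp; ring
    have hKA : 0 ≤ K / (2 * A) := by positivity
    have hKκ : 0 ≤ K * κ / 2 := by positivity
    have p1 : 0 ≤ K / (2 * A) * M := by positivity
    have p2 : 0 ≤ κ * M := by positivity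
    nlinarith
  have lower : A * κ ^ 2 - κ ≤ 0 := by
    refine nonpos_of_quadratic_le_linear
      (K := 2 * (2 + K * κ / 2 + κ / 2 + (K + K ^ 2) / (2 * A))) fun M => ?_
    obtain ⟨T, hT⟩ : ∃ T : ℝ, T = A * κ * M := ⟨_, rfl⟩
    have hT0 : 0 ≤ T := by rw [hT]; positivity
    have hup := (card_triangle_bounds κ hκ0.le (fun y => (y : ℝ) / α)
      (fun y => (A * κ * M - B * y) / A) M (hab M)).2
    set S := (Finset.range (M + 1)).sigma
      (fun y : ℕ => Finset.Icc ⌈(y : ℝ) / α⌉ ⌊(A * κ * M - B * (y : ℝ)) / A⌋) with hS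
    obtain ⟨W, hW⟩ : ∃ W : ℝ, W = (T ^ 2 - K * (T + 1) - K ^ 2) / (2 * A) := ⟨_, rfl⟩
    have hcard : (Finset.range ⌊W⌋₊).card ≤ S.card := by
      refine Finset.card_le_card_of_injOn (fun v => ⟨(gy v).toNat, gx v⟩) ?_ ?_
      · intro v hv
        have hvW : (v : ℝ) < W := Nat.lt_of_lt_floor (Finset.mem_range.1 hv)
        rw [hW, lt_div_iff₀ (by positivity)] at hvW
        obtain ⟨h3, h4⟩ := hsq _ _ (hg v)
        rw [hgv] at h4
        have h5 := (abs_le.1 h4).1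
        push_cast at h5
        have hLT : (A : ℝ) * gx v + B * gy v ≤ T := by
          by_contra! hlt
          set L := (A : ℝ) * gx v + B * gy v
          have h6 : -K ^ 2 ≤ (L - T) * (L + T - K) := by
            rcases le_or_gt K (L + T) with h7 | h7
            · nlinarith [mul_nonneg (sub_nonneg.2 hlt.le) (sub_nonneg.2 h7)]
            · nlinarith [mul_nonneg (by linarith : 0 ≤ K - (L - T))
                (by linarith : 0 ≤ K - L - T), mul_nonneg hK (by linarith : 0 ≤ L + T)]
          nlinarith
        have hy0 : (0 : ℝ) ≤ gy v := by exact_mod_cast (hg v).1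
        have hyx := (hg v).2
        have hyN : (((gy v).toNat : ℕ) : ℝ) = gy v := by
          have : (((gy v).toNat : ℤ) : ℝ) = gy v := by rw [Int.toNat_of_nonneg (hg v).1]
          exact_mod_cast this
        simp only [hS, Finset.mem_coe, Finset.mem_sigma, Finset.mem_range, Finset.mem_Icc]
        refine ⟨?_, ?_, ?_⟩
        · have h6 : (A + B * α) * (gy v : ℝ) ≤ (A + B * α) * M := by
            have h7 := mul_le_mul_of_nonneg_left hLT hα.le
            have h8 := mul_le_mul_of_nonneg_left hyx hA.le
            rw [hT] at h7
            have h9 : α * (A * κ * M) = (A + B * α) * M := by rw [← hAκ]; ring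
            linarith
          have h7 := le_of_mul_le_mul_left h6 hend
          rw [← hyN] at h7
          have : (gy v).toNat ≤ M := by exact_mod_cast h7
          omega
        · rw [Int.ceil_le, hyN, div_le_iff₀ hα]; linarith
        · rw [Int.le_floor, hyN, le_div_iff₀ hA]; rw [hT] at hLT; linarith
      · intro v _ v' _ heq
        simp only [Sigma.mk.injEq, heq_eq_eq] at heq
        have e1 : gy v = gy v' := by
          have := (hg v).1
          have := (hg v').1
          omega
        have e2 := hgv v
        rw [heq.2, e1, hgv v'] at e2
        omega
    rw [Finset.card_range] at hcard
    have hcard' : ((⌊W⌋₊ : ℕ) : ℝ) ≤ S.card := by exact_mod_cast hcard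
    have hfl := Nat.lt_floor_add_one W
    have hM : (0 : ℝ) ≤ M := Nat.cast_nonneg _
    have hWe : W = A * κ ^ 2 * M ^ 2 / 2 - K * κ / 2 * M - (K + K ^ 2) / (2 * A) := by
      rw [hW, hT]; field_simp; ring
    have hKA : 0 ≤ (K + K ^ 2) / (2 * A) := by positivity
    have hKκ : 0 ≤ K * κ / 2 := by positivity
    have p1 : 0 ≤ (K + K ^ 2) / (2 * A) * M := by positivity
    nlinarith
  have h1 : κ * (A * κ - 1) = 0 := by linarith
  have h2 : A * κ = 1 := by
    rcases mul_eq_zero.1 h1 with h3 | h3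
    · exact absurd h3 hκ0.ne'
    · linarith
  rw [← hAκ, h2, one_mul]

/-- If `P(x,y) = A·x(x−1)/2 + B·xy + C·y(y−1)/2 + D·x + E·y + F` with integer
coefficients is a quadratic packing polynomial on `S(α)`, then `α = A/(1−B)`;
in particular `α` is rational. -/
theorem packing_polynomial_alpha_eq
    (α : ℝ) (hα : 0 < α)
    (A B C D E F : ℤ) (hABC : ¬(A = 0 ∧ B = 0 ∧ C = 0))
    (P : ℝ → ℝ → ℝ)
    (hP : ∀ x y : ℝ, P x y =
      (A : ℝ) * (x * (x - 1) / 2) + (B : ℝ) * (x * y) + (C : ℝ) * (y * (y - 1) / 2)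
        + (D : ℝ) * x + (E : ℝ) * y + (F : ℝ))
    (hpack : Set.BijOn (fun z : ℝ × ℝ => P z.1 z.2)
        {z : ℝ × ℝ | (0 ≤ z.2 ∧ z.2 ≤ α * z.1) ∧ ∃ m n : ℤ, z.1 = m ∧ z.2 = n}
        {x : ℝ | ∃ k : ℕ, x = k}) :
    α = (A : ℝ) / (1 - (B : ℝ)) ∧ ∃ q : ℚ, α = (q : ℝ) := by
  have hdbl : ∀ x y : ℤ, (dbl A B C D E F x y : ℝ) = 2 * P x y := by
    intro x y
    rw [hP]; simp only [dbl]; push_cast; ring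
  have hmem : ∀ x y : ℤ, InSector α x y → ((x : ℝ), (y : ℝ)) ∈
      {z : ℝ × ℝ | (0 ≤ z.2 ∧ z.2 ≤ α * z.1) ∧ ∃ m n : ℤ, z.1 = m ∧ z.2 = n} :=
    fun x y h => ⟨⟨Int.cast_nonneg h.1, h.2⟩, x, y, rfl, rfl⟩
  have hpacks : Packs α A B C D E F := by
    refine ⟨fun x y h => ?_, fun x y x' y' h h' heq => ?_, fun k => ?_⟩
    · obtain ⟨k, hk⟩ := hpack.mapsTo (hmem x y h)
      refine ⟨k, ?_⟩
      have := hdbl x y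
      simp only at hk
      rw [hk] at this
      exact_mod_cast this
    · have e := hpack.injOn (hmem x y h) (hmem x' y' h') (by
        have h1 := hdbl x y
        rw [heq, hdbl x' y'] at h1
        simp only
        linarith)
      simpa using e
    · obtain ⟨⟨a, b⟩, ⟨⟨h0, h1⟩, x, y, hx, hy⟩, hk⟩ := hpack.surjOn ⟨k, rfl⟩
      simp only at h0 h1 hx hy hk
      subst hx hy
      refine ⟨x, y, ⟨by exact_mod_cast h0, h1⟩, ?_⟩
      have := hdbl x y
      rw [hk] at this
      exact_mod_cast this
  obtain ⟨hA, hslope⟩ := hpacks.slope_eq hα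
  have hB : (1 : ℝ) - B ≠ 0 := by
    intro h0
    have : (B : ℝ) = 1 := by linarith
    rw [this] at hslope
    linarith
  have hmain : α = (A : ℝ) / (1 - (B : ℝ)) := by
    rw [eq_div_iff hB]; linarith
  exact ⟨hmain, (A : ℚ) / (1 - B), by rw [hmain]; push_cast; rfl⟩
end

section
/- If P is a quadratic packing polynomial on the sector S(α) for some α > 0, then the number of integer lattice points in the region R_n = {(x,y) ∈ S(α) : 0 ≤ P(x,y) ≤ n} equals the Lebesgue area of R_n up to an error of O(√n) as n → ∞; that is, there exists a constant K > 0 such that |#(R_n ∩ ℤ²) − area(R_n)| ≤ K·√n for all sufficiently large n. -/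
/-!
The idea is that the values of `P` on the lattice points of the sector are exactly `0, 1, 2, …`, so
`R n` contains exactly `n + 1` lattice points, and it remains to show `area (R n) = n + O(√n)`.

*Coercivity.* Let `Q` be the quadratic part of `P`. Then `Q (1, τ) > 0` for all `τ ∈ [0, α]`
(`quadratic_part_pos`). Otherwise, moving from the ray through `(1, τ)` into the sector, `P` is at
most `C * x * i` at a lattice point with abscissa `x` and at vertical distance in `[i - 1, i]` from
the ray. By divergence of the harmonic series, such a growth produces far more than `C * M + 1`
lattice points with `P ≤ C * M`, which contradicts injectivity (`no_slow_injection`). By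
compactness `Q (x, y) ≥ q * x ^ 2` on the sector for some `q > 0`, hence `x = O(√n)` on `R n`
(`abscissa_bound`), and a bounded displacement changes `P` by `O(√n)` there (`shift_bound`).

*Comparison of areas.* Let `z k` be the lattice point with `P (z k) = k` and let `T = O(√n)` bound
the change above. Every point of `R n` lies in the unit square whose lower right corner is a
lattice point of the sector with `P ≤ n + T` there; hence `area (R n) ≤ n + T + 1`. Conversely, for
`T ≤ k ≤ n - T` the unit square at `z k`, shifted to the right by a fixed integer so that it lies
inside the sector, is contained in `R n`; these squares are disjoint, so
`area (R n) ≥ n + 1 - 2 * T`.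
-/

open MeasureTheory

/-- A polynomial of total degree at most two in two variables is given by six coefficients. -/
lemma exists_quadratic_coeffs (P : MvPolynomial (Fin 2) ℝ) (hdeg : P.totalDegree ≤ 2) :
    ∃ a b c d e g : ℝ, ∀ x y : ℝ, MvPolynomial.eval ![x, y] P =
      a * x ^ 2 + b * x * y + c * y ^ 2 + d * x + e * y + g := by
  have key : ∃ a b c d e g : ℝ, ∀ v : ℝ × ℝ,
      (∑ m ∈ P.support, fun v : ℝ × ℝ => P.coeff m * ∏ i, ![v.1, v.2] i ^ m i) v =
      a * v.1 ^ 2 + b * v.1 * v.2 + c * v.2 ^ 2 + d * v.1 + e * v.2 + g := by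
    refine Finset.sum_induction _ (fun F : ℝ × ℝ → ℝ => ∃ a b c d e g : ℝ, ∀ v : ℝ × ℝ,
      F v = a * v.1 ^ 2 + b * v.1 * v.2 + c * v.2 ^ 2 + d * v.1 + e * v.2 + g) ?_ ?_ ?_
    · rintro F G ⟨a, b, c, d, e, g, h⟩ ⟨a', b', c', d', e', g', h'⟩
      refine ⟨a + a', b + b', c + c', d + d', e + e', g + g', fun v => ?_⟩
      rw [Pi.add_apply, h, h']; ring
    · exact ⟨0, 0, 0, 0, 0, 0, fun v => by simp⟩
    · intro m hm
      have h1 := (MvPolynomial.le_totalDegree hm).trans hdeg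
      rw [Finsupp.sum_fintype _ _ (by simp)] at h1
      simp only [Fin.sum_univ_two] at h1
      generalize P.coeff m = r
      have h2 : ∀ v : ℝ × ℝ, r * ∏ i, ![v.1, v.2] i ^ m i = r * (v.1 ^ m 0 * v.2 ^ m 1) := by
        intro v; simp [Fin.prod_univ_two]
      simp only [h2]
      generalize m 0 = s at *
      generalize m 1 = t at *
      have hs : s ≤ 2 := by omega
      have ht : t ≤ 2 := by omega
      interval_cases s <;> interval_cases t <;> first
        | omega
        | exact ⟨0, 0, 0, 0, 0, r, fun v => by ring1⟩
        | exact ⟨0, 0, 0, 0, r, 0, fun v => by ring1⟩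
        | exact ⟨0, 0, 0, r, 0, 0, fun v => by ring1⟩
        | exact ⟨0, 0, r, 0, 0, 0, fun v => by ring1⟩
        | exact ⟨0, r, 0, 0, 0, 0, fun v => by ring1⟩
        | exact ⟨r, 0, 0, 0, 0, 0, fun v => by ring1⟩
  obtain ⟨a, b, c, d, e, g, h⟩ := key
  refine ⟨a, b, c, d, e, g, fun x y => ?_⟩
  rw [MvPolynomial.eval_eq', ← h (x, y), Finset.sum_apply]

/-- No injective `k` into `ℕ` on the pairs `(x, i)` with `1 ≤ i` and `D * i ≤ x` is bounded by
`C * (x * i)`: the number of such pairs with `x * i ≤ M` grows faster than linearly in `M`, because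
the harmonic series diverges. -/
lemma no_slow_injection (C D : ℕ) (k : ℕ × ℕ → ℕ)
    (hinj : Set.InjOn k {p | 1 ≤ p.2 ∧ D * p.2 ≤ p.1})
    (hb : ∀ p : ℕ × ℕ, 1 ≤ p.2 → D * p.2 ≤ p.1 → k p ≤ C * (p.1 * p.2)) : False := by
  obtain ⟨I, hI⟩ : ∃ I : ℕ, (C : ℝ) + 1 ≤ ∑ i ∈ Finset.range I, 1 / ((i : ℝ) + 1) :=
    (Real.tendsto_sum_range_one_div_nat_succ_atTop.eventually_ge_atTop _).exists
  obtain ⟨M, hM⟩ : ∃ M : ℕ, (∑ i ∈ Finset.range I, (D : ℝ) * ((i : ℝ) + 1)) + 1 < M :=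
    exists_nat_gt _
  let s : Finset (Σ _ : ℕ, ℕ) :=
    (Finset.range I).sigma fun i => Finset.Icc (D * (i + 1)) (M / (i + 1))
  have hcard : s.card ≤ (Finset.range (C * M + 1)).card := by
    refine Finset.card_le_card_of_injOn (fun p => k (p.2, p.1 + 1)) ?_ ?_
    · rintro ⟨i, x⟩ hp
      simp only [s, Finset.coe_sigma, Set.mem_sigma_iff, Finset.mem_coe, Finset.mem_range,
        Finset.mem_Icc] at hp
      have h1 := hb (x, i + 1) (by simp) hp.2.1
      have h2 : x * (i + 1) ≤ M := (Nat.mul_le_mul_right _ hp.2.2).trans (Nat.div_mul_le_self _ _)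
      have h3 := Nat.mul_le_mul_left C h2
      simp only [Finset.coe_range, Set.mem_Iio]
      simp only at h1
      omega
    · rintro ⟨i, x⟩ hp ⟨j, y⟩ hq h
      simp only [s, Finset.coe_sigma, Set.mem_sigma_iff, Finset.mem_coe, Finset.mem_range,
        Finset.mem_Icc] at hp hq
      have := hinj (x₁ := (x, i + 1)) (x₂ := (y, j + 1)) ⟨by simp, hp.2.1⟩ ⟨by simp, hq.2.1⟩ h
      simp only [Prod.mk.injEq, Nat.add_right_cancel_iff] at this
      obtain ⟨rfl, rfl⟩ := this
      rfl
  rw [Finset.card_sigma, Finset.card_range] at hcard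
  have hreal : ((∑ i ∈ Finset.range I,
      (Finset.Icc (D * (i + 1)) (M / (i + 1))).card : ℕ) : ℝ) ≤ C * M + 1 := by
    exact_mod_cast hcard
  have hlow : (M : ℝ) * ∑ i ∈ Finset.range I, 1 / ((i : ℝ) + 1) -
      ∑ i ∈ Finset.range I, (D : ℝ) * ((i : ℝ) + 1) ≤
      ((∑ i ∈ Finset.range I, (Finset.Icc (D * (i + 1)) (M / (i + 1))).card : ℕ) : ℝ) := by
    rw [Finset.mul_sum, ← Finset.sum_sub_distrib]
    push_cast
    refine Finset.sum_le_sum fun i _ => ?_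
    rw [Nat.card_Icc]
    have h1 : (M : ℝ) * (1 / ((i : ℝ) + 1)) ≤ ((M / (i + 1) : ℕ) : ℝ) + 1 := by
      have : M < (M / (i + 1) + 1) * (i + 1) := by
        have := Nat.lt_div_mul_add (a := M) (b := i + 1) (by omega)
        nlinarith
      have h2 : (M : ℝ) < (((M / (i + 1) : ℕ) : ℝ) + 1) * ((i : ℝ) + 1) := by exact_mod_cast this
      rw [mul_one_div, div_le_iff₀ (by positivity)]
      exact h2.le
    have h2 : M / (i + 1) + 1 ≤ (M / (i + 1) + 1 - D * (i + 1)) + D * (i + 1) := by omega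
    have h3 : ((M / (i + 1) : ℕ) : ℝ) + 1 ≤
        ((M / (i + 1) + 1 - D * (i + 1) : ℕ) : ℝ) + D * ((i : ℝ) + 1) := by exact_mod_cast h2
    linarith
  have hM0 : (0 : ℝ) ≤ M := Nat.cast_nonneg _
  nlinarith [mul_le_mul_of_nonneg_left hI hM0]

/-- Lattice points `(x, y)` of the sector near the ray of slope `τ`, on the side of the ray that
has room in the sector: `i` is the vertical distance to the ray, rounded up. -/
lemma exists_points_near_ray (α : ℝ) (hα : 0 < α) (τ : ℝ) (h0 : 0 ≤ τ) (h1 : τ ≤ α) :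
    ∃ D : ℕ, 1 ≤ D ∧ ∃ Y : ℕ → ℕ → ℤ, (∀ x i j, Y x i = Y x j → i = j) ∧
      ∀ x i : ℕ, 1 ≤ i → D * i ≤ x →
        (0 ≤ (Y x i : ℝ) ∧ (Y x i : ℝ) ≤ α * x) ∧ |(Y x i : ℝ) - τ * x| ≤ i := by
  have room : ∀ δ : ℝ, 0 < δ → ∃ D : ℕ, 1 ≤ D ∧ ∀ x i : ℕ, D * i ≤ x → (i : ℝ) ≤ δ * x := by
    intro δ hδ
    obtain ⟨D, hD⟩ := exists_nat_gt (1 / δ)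
    have hD0 : (0 : ℝ) < D := lt_trans (by positivity) hD
    refine ⟨D, by exact_mod_cast hD0, fun x i h => ?_⟩
    have h' : (D : ℝ) * i ≤ x := by exact_mod_cast h
    rw [div_lt_iff₀ hδ] at hD
    have hi : (0 : ℝ) ≤ i := Nat.cast_nonneg _
    nlinarith [mul_le_mul_of_nonneg_left h' hδ.le]
  rcases h1.lt_or_eq with hlt | rfl
  · obtain ⟨D, hD1, hD⟩ := room (α - τ) (by linarith)
    refine ⟨D, hD1, fun x i => ⌈τ * x⌉ + i - 1, fun x i j h => by simp only at h; omega, ?_⟩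
    intro x i hi hx
    have h2 := hD x i hx
    have h3 := Int.le_ceil (τ * x)
    have h4 := Int.ceil_lt_add_one (τ * x)
    have h5 : (1 : ℝ) ≤ i := by exact_mod_cast hi
    have h6 : 0 ≤ τ * x := by positivity
    push_cast
    refine ⟨⟨by linarith, by linarith⟩, abs_le.2 ⟨by linarith, by linarith⟩⟩
  · obtain ⟨D, hD1, hD⟩ := room τ hα
    refine ⟨D, hD1, fun x i => ⌊τ * x⌋ - i + 1, fun x i j h => by simp only at h; omega, ?_⟩
    intro x i hi hx
    have h2 := hD x i hx
    have h3 := Int.floor_le (τ * x)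
    have h4 := Int.lt_floor_add_one (τ * x)
    have h5 : (1 : ℝ) ≤ i := by exact_mod_cast hi
    push_cast
    refine ⟨⟨by linarith, by linarith⟩, abs_le.2 ⟨by linarith, by linarith⟩⟩

/-- The quadratic part of a polynomial that maps the lattice points of the sector injectively into
`ℕ` is positive in every direction of the closed sector. -/
lemma quadratic_part_pos (α : ℝ) (hα : 0 < α) (a b c d e g : ℝ)
    (f : ℝ × ℝ → ℝ) (hf : ∀ x y : ℝ, f (x, y) =
      a * x ^ 2 + b * x * y + c * y ^ 2 + d * x + e * y + g)
    (S : Set (ℝ × ℝ))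
    (hS : S = {z : ℝ × ℝ | (0 ≤ z.2 ∧ z.2 ≤ α * z.1) ∧ ∃ m n : ℤ, z.1 = m ∧ z.2 = n})
    (hinj : Set.InjOn f S) (hmaps : ∀ z ∈ S, ∃ k : ℕ, f z = k)
    (τ : ℝ) (h0 : 0 ≤ τ) (h1 : τ ≤ α) : 0 < a + b * τ + c * τ ^ 2 := by
  by_contra! hQ
  obtain ⟨D, hD1, Y, hYinj, hY⟩ := exists_points_near_ray α hα τ h0 h1
  have hmem : ∀ p : ℕ × ℕ, 1 ≤ p.2 → D * p.2 ≤ p.1 →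
      (((p.1 : ℝ), (Y p.1 p.2 : ℝ)) : ℝ × ℝ) ∈ S := by
    rintro ⟨x, i⟩ hi hx
    rw [hS]
    exact ⟨(hY x i hi hx).1, x, Y x i, by simp, rfl⟩
  choose! k hk using hmaps
  obtain ⟨C, hC⟩ := exists_nat_gt
    (|b| + 2 * |c| * τ + |c| + |d| + |e| * (τ + 1) + |g|)
  refine no_slow_injection C D (fun p => k ((p.1 : ℝ), (Y p.1 p.2 : ℝ))) ?_ ?_
  · rintro ⟨x, i⟩ ⟨hi, hx⟩ ⟨y, j⟩ ⟨hj, hy⟩ h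
    have h2 := hinj (hmem (x, i) hi hx) (hmem (y, j) hj hy)
      (by rw [hk _ (hmem (x, i) hi hx), hk _ (hmem (y, j) hj hy)]; exact congrArg _ h)
    simp only [Prod.mk.injEq, Nat.cast_inj, Int.cast_inj] at h2
    obtain ⟨rfl, h3⟩ := h2
    rw [hYinj _ _ _ h3]
  · rintro ⟨x, i⟩ hi hx
    have hfk := hk _ (hmem (x, i) hi hx)
    have hv := (hY x i hi hx).2
    simp only at hi hx hfk hv ⊢
    have hix : i ≤ x := le_trans (by nlinarith) hx
    have hi' : (1 : ℝ) ≤ i := by exact_mod_cast hi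
    have hix' : (i : ℝ) ≤ x := by exact_mod_cast hix
    obtain ⟨v, hv'⟩ : ∃ v : ℝ, v = (Y x i : ℝ) - τ * x := ⟨_, rfl⟩
    have hy : (Y x i : ℝ) = τ * x + v := by linarith
    rw [← hv'] at hv
    suffices h : ((k ((x : ℝ), (Y x i : ℝ)) : ℕ) : ℝ) ≤ C * (x * i) by exact_mod_cast h
    rw [← hfk, hf, hy]
    have hx1 : (1 : ℝ) ≤ x := hi'.trans hix'
    generalize (i : ℝ) = t at *
    generalize (x : ℝ) = w at *
    have hxi : w ≤ w * t := by nlinarith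
    have hti : t ≤ w * t := by nlinarith
    have htt : t ^ 2 ≤ w * t := by nlinarith
    have h1i : 1 ≤ w * t := by nlinarith
    have habs : ∀ r s B : ℝ, |s| ≤ B → r * s ≤ |r| * B := fun r s B h =>
      (le_abs_self _).trans (by rw [abs_mul]; gcongr)
    have e0 : (a + b * τ + c * τ ^ 2) * w ^ 2 ≤ 0 :=
      mul_nonpos_of_nonpos_of_nonneg hQ (sq_nonneg _)
    have hwv : |w * v| ≤ w * t := by
      rw [abs_mul, abs_of_nonneg (by linarith)]; gcongr
    have hvv : |v ^ 2| ≤ w * t := by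
      rw [abs_pow]; exact (pow_le_pow_left₀ (abs_nonneg _) hv 2).trans htt
    have e1 := habs b _ _ hwv
    have e2 := mul_le_mul_of_nonneg_left (habs c _ _ hwv) (by linarith : 0 ≤ 2 * τ)
    have e3 := habs c _ _ hvv
    have e4 := habs d w (w * t) (by rw [abs_of_nonneg (by linarith)]; exact hxi)
    have e5 := habs e (τ * w + v) ((τ + 1) * (w * t)) (by
      refine (abs_add_le _ _).trans ?_
      rw [abs_of_nonneg (by positivity)]
      nlinarith)
    have e6 := habs g 1 (w * t) (by simpa using h1i)
    have e7 := mul_le_mul_of_nonneg_right hC.le (by positivity : 0 ≤ w * t)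
    nlinarith

/-- Moving a point of the sector by a bounded amount changes a quadratic polynomial by at most a
multiple of `x + 1`, where `x` is the abscissa. -/
lemma shift_bound (α : ℝ) (hα : 0 < α) (a b c d e g : ℝ)
    (f : ℝ × ℝ → ℝ) (hf : ∀ x y : ℝ, f (x, y) =
      a * x ^ 2 + b * x * y + c * y ^ 2 + d * x + e * y + g) (L : ℝ) (hL : 0 ≤ L) :
    ∃ G : ℝ, 0 ≤ G ∧ ∀ x y x' y' : ℝ, 0 ≤ y → y ≤ α * x → |x' - x| ≤ L → |y' - y| ≤ L →
      |f (x', y') - f (x, y)| ≤ G * (x + 1) := by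
  refine ⟨|a| * (2 * L + L ^ 2) + |b| * (L + α * L + L ^ 2) + |c| * (2 * α * L + L ^ 2)
    + |d| * L + |e| * L, by positivity, ?_⟩
  intro x y x' y' hy hyx hh hk
  have hx : 0 ≤ x := by
    by_contra! h; nlinarith
  obtain ⟨h, rfl⟩ : ∃ h, x' = x + h := ⟨x' - x, by ring⟩
  obtain ⟨k, rfl⟩ : ∃ k, y' = y + k := ⟨y' - y, by ring⟩
  rw [add_sub_cancel_left] at hh hk
  rw [hf, hf]
  have hid : a * (x + h) ^ 2 + b * (x + h) * (y + k) + c * (y + k) ^ 2 + d * (x + h) + e * (y + k)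
      + g - (a * x ^ 2 + b * x * y + c * y ^ 2 + d * x + e * y + g) =
      a * (2 * (x * h) + h * h) + b * (x * k + y * h + h * k) + c * (2 * (y * k) + k * k)
        + d * h + e * k := by ring
  rw [hid]
  have hX : |x| ≤ x + 1 := by rw [abs_of_nonneg hx]; linarith
  have hY : |y| ≤ α * (x + 1) := by rw [abs_of_nonneg hy]; nlinarith
  have hprod : ∀ r s A B : ℝ, |r| ≤ A → |s| ≤ B → |r * s| ≤ A * B := fun r s A B h1 h2 => by
    rw [abs_mul]; exact mul_le_mul h1 h2 (abs_nonneg _) ((abs_nonneg _).trans h1)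
  have hLL : ∀ r s : ℝ, |r| ≤ L → |s| ≤ L → |r * s| ≤ L ^ 2 * (x + 1) := fun r s h1 h2 =>
    (hprod r s L L h1 h2).trans (by nlinarith [mul_nonneg (sq_nonneg L) hx])
  have t1 : |2 * (x * h) + h * h| ≤ (2 * L + L ^ 2) * (x + 1) := by
    have h1 := hprod x h _ _ hX hh
    have h2 := hLL h h hh hh
    rw [abs_le] at *
    constructor <;> linarith [h1.1, h1.2, h2.1, h2.2]
  have t2 : |x * k + y * h + h * k| ≤ (L + α * L + L ^ 2) * (x + 1) := by
    have h1 := hprod x k _ _ hX hk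
    have h2 := hprod y h _ _ hY hh
    have h3 := hLL h k hh hk
    rw [abs_le] at *
    constructor <;> linarith [h1.1, h1.2, h2.1, h2.2, h3.1, h3.2]
  have t3 : |2 * (y * k) + k * k| ≤ (2 * α * L + L ^ 2) * (x + 1) := by
    have h1 := hprod y k _ _ hY hk
    have h2 := hLL k k hk hk
    rw [abs_le] at *
    constructor <;> linarith [h1.1, h1.2, h2.1, h2.2]
  have t4 : |h| ≤ L * (x + 1) := by nlinarith [mul_nonneg hL hx]
  have t5 : |k| ≤ L * (x + 1) := by nlinarith [mul_nonneg hL hx]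
  have u1 := hprod a _ _ _ le_rfl t1
  have u2 := hprod b _ _ _ le_rfl t2
  have u3 := hprod c _ _ _ le_rfl t3
  have u4 := hprod d _ _ _ le_rfl t4
  have u5 := hprod e _ _ _ le_rfl t5
  rw [abs_le] at u1 u2 u3 u4 u5 ⊢
  constructor <;> linarith [u1.1, u1.2, u2.1, u2.2, u3.1, u3.2, u4.1, u4.2, u5.1, u5.2]

/-- If the quadratic part is positive on the closed sector, then `f ≤ n` forces `x = O(√n)`. -/
lemma abscissa_bound (α : ℝ) (hα : 0 < α) (a b c d e g : ℝ)
    (f : ℝ × ℝ → ℝ) (hf : ∀ x y : ℝ, f (x, y) =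
      a * x ^ 2 + b * x * y + c * y ^ 2 + d * x + e * y + g)
    (hQ : ∀ τ : ℝ, 0 ≤ τ → τ ≤ α → 0 < a + b * τ + c * τ ^ 2) :
    ∃ K : ℝ, 0 ≤ K ∧ ∀ n : ℕ, 1 ≤ n → ∀ x y : ℝ, 0 ≤ y → y ≤ α * x → f (x, y) ≤ n →
      x ≤ K * √n := by
  obtain ⟨τ₀, hτ₀, hmin⟩ := isCompact_Icc.exists_isMinOn (Set.nonempty_Icc.2 hα.le)
    (f := fun τ : ℝ => a + b * τ + c * τ ^ 2) (by fun_prop)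
  obtain ⟨q, hq⟩ : ∃ q : ℝ, q = a + b * τ₀ + c * τ₀ ^ 2 := ⟨_, rfl⟩
  have hq0 : 0 < q := hq ▸ hQ τ₀ hτ₀.1 hτ₀.2
  have hqmin : ∀ τ : ℝ, 0 ≤ τ → τ ≤ α → q ≤ a + b * τ + c * τ ^ 2 := fun τ h1 h2 =>
    hq ▸ hmin (Set.mem_Icc.2 ⟨h1, h2⟩)
  obtain ⟨G, hG⟩ : ∃ G : ℝ, G = |d| + |e| * α + |g| := ⟨_, rfl⟩
  have hG0 : 0 ≤ G := by rw [hG]; positivity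
  refine ⟨1 + (1 + G) / q, by positivity, ?_⟩
  intro n hn x y hy hyx hfn
  have hs1 : 1 ≤ √(n : ℝ) := by rw [Real.one_le_sqrt]; exact_mod_cast hn
  have hsn : √(n : ℝ) * √(n : ℝ) = n := Real.mul_self_sqrt (Nat.cast_nonneg _)
  rw [hf, ← hsn] at hfn
  generalize √(n : ℝ) = s at *
  by_contra! hlt
  have hquo : 0 ≤ (1 + G) / q := by positivity
  have hxs : s ≤ x := by nlinarith
  have hx1 : 1 ≤ x := hs1.trans hxs
  have hquad : q * x ^ 2 ≤ a * x ^ 2 + b * x * y + c * y ^ 2 := by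
    have h1 := hqmin (y / x) (by positivity) (by rw [div_le_iff₀ (by linarith)]; exact hyx)
    have h2 := mul_le_mul_of_nonneg_right h1 (sq_nonneg x)
    refine h2.trans (le_of_eq ?_)
    field_simp
  have hlin : -(G * x) ≤ d * x + e * y + g := by
    have h1 : -(|d| * x) ≤ d * x := by nlinarith [neg_abs_le d]
    have h2 : -(|e| * (α * x)) ≤ e * y := by
      nlinarith [neg_abs_le e, mul_le_mul_of_nonneg_left hyx (abs_nonneg e)]
    have h3 : -(|g| * x) ≤ g := by nlinarith [neg_abs_le g, abs_nonneg g]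
    rw [hG]; linarith
  have h4 : q * x ^ 2 ≤ (1 + G) * s * x := by nlinarith [mul_nonneg hG0 (by linarith : 0 ≤ x)]
  have h5 : q * x ≤ (1 + G) * s := by nlinarith
  have h6 : (1 + (1 + G) / q) * s * q = q * s + (1 + G) * s := by field_simp
  nlinarith

/-- The half-open unit square with lower left corner `(x, y)`. -/
def unitSquare (x y : ℝ) : Set (ℝ × ℝ) := Set.Ico x (x + 1) ×ˢ Set.Ico y (y + 1)

lemma volume_unitSquare (x y : ℝ) : volume (unitSquare x y) = 1 := by
  rw [unitSquare, Measure.volume_eq_prod, Measure.prod_prod]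
  simp

lemma measurableSet_unitSquare (x y : ℝ) : MeasurableSet (unitSquare x y) :=
  measurableSet_Ico.prod measurableSet_Ico

theorem lattice_point_count_eq_area_up_to_sqrt_error
    (α : ℝ) (hα : 0 < α)
    (P : MvPolynomial (Fin 2) ℝ) (hdeg : P.totalDegree = 2)
    (f : ℝ × ℝ → ℝ) (hf : ∀ z : ℝ × ℝ, f z = MvPolynomial.eval ![z.1, z.2] P)
    (hpack : Set.BijOn f
        {z : ℝ × ℝ | (0 ≤ z.2 ∧ z.2 ≤ α * z.1) ∧ ∃ m n : ℤ, z.1 = m ∧ z.2 = n}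
        {x : ℝ | ∃ k : ℕ, x = k})
    (R : ℕ → Set (ℝ × ℝ))
    (hR : ∀ n : ℕ, R n =
      {z : ℝ × ℝ | (0 ≤ z.2 ∧ z.2 ≤ α * z.1) ∧ 0 ≤ f z ∧ f z ≤ (n : ℝ)}) :
    ∃ K : ℝ, 0 < K ∧ ∃ N : ℕ, ∀ n : ℕ, N ≤ n →
      |(Set.ncard {z ∈ R n | ∃ m k : ℤ, z.1 = m ∧ z.2 = k} : ℝ)
          - (MeasureTheory.volume (R n)).toReal| ≤ K * Real.sqrt n := by
  obtain ⟨a, b, c, d, e, g, hP⟩ := exists_quadratic_coeffs P hdeg.le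
  have hq : ∀ x y : ℝ, f (x, y) = a * x ^ 2 + b * x * y + c * y ^ 2 + d * x + e * y + g :=
    fun x y => by rw [hf, hP]
  obtain ⟨S, hS⟩ : ∃ S : Set (ℝ × ℝ),
    S = {z : ℝ × ℝ | (0 ≤ z.2 ∧ z.2 ≤ α * z.1) ∧ ∃ m n : ℤ, z.1 = m ∧ z.2 = n} := ⟨_, rfl⟩
  rw [← hS] at hpack
  have hQ := quadratic_part_pos α hα a b c d e g f hq S hS hpack.injOn
    (fun z hz => hpack.mapsTo hz)
  obtain ⟨K, hK0, hK⟩ := abscissa_bound α hα a b c d e g f hq hQ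
  -- A unit square moved `p` steps to the right stays below the upper edge of the sector.
  obtain ⟨p, hp⟩ := exists_nat_gt (1 / α)
  rw [div_lt_iff₀ hα] at hp
  obtain ⟨G, hG0, hG⟩ := shift_bound α hα a b c d e g f hq (p + 1) (by positivity)
  have hex : ∀ k : ℕ, ∃ z ∈ S, f z = k := fun k => hpack.surjOn ⟨k, rfl⟩
  choose z hzS hzf using hex
  have hzint : ∀ k, ∃ m n : ℤ, (z k).1 = m ∧ (z k).2 = n := fun k => by
    have := hzS k; rw [hS] at this; exact this.2
  have hzsec : ∀ k, 0 ≤ (z k).2 ∧ (z k).2 ≤ α * (z k).1 := fun k => by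
    have := hzS k; rw [hS] at this; exact this.1
  have hzinj : Function.Injective z := fun i j h => by
    have := congrArg f h
    rw [hzf, hzf] at this
    exact_mod_cast this
  have hzuniq : ∀ w ∈ S, ∀ k : ℕ, f w = k → w = z k := fun w hw k h =>
    hpack.injOn hw (hzS k) (by rw [h, hzf])
  refine ⟨2 * (G * (K + 1)) + 2, by positivity, 1, fun n hn => ?_⟩
  have hcount : Set.ncard {z ∈ R n | ∃ m k : ℤ, z.1 = m ∧ z.2 = k} = n + 1 := by
    have : {z ∈ R n | ∃ m k : ℤ, z.1 = m ∧ z.2 = k} =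
        ((Finset.range (n + 1)).image z : Finset (ℝ × ℝ)) := by
      ext w
      simp only [hR, Set.mem_ofPred_eq, Finset.coe_image, Finset.coe_range, Set.mem_image,
        Set.mem_Iio]
      constructor
      · rintro ⟨⟨hw, -, hwn⟩, hint⟩
        have hwS : w ∈ S := by rw [hS]; exact ⟨hw, hint⟩
        obtain ⟨k, hk⟩ := hpack.mapsTo hwS
        refine ⟨k, ?_, (hzuniq w hwS k hk).symm⟩
        rw [hk] at hwn
        exact Nat.lt_succ_of_le (by exact_mod_cast hwn)
      · rintro ⟨k, hk, rfl⟩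
        refine ⟨⟨hzsec k, ?_, ?_⟩, hzint k⟩
        · rw [hzf]; positivity
        · rw [hzf]; exact_mod_cast Nat.le_of_lt_succ hk
    rw [this, Set.ncard_coe_finset, Finset.card_image_of_injective _ hzinj, Finset.card_range]
  have hs1 : 1 ≤ √(n : ℝ) := by rw [Real.one_le_sqrt]; exact_mod_cast hn
  obtain ⟨T, hT⟩ : ∃ T : ℕ, T = ⌈G * (K + 1) * √(n : ℝ)⌉₊ := ⟨_, rfl⟩
  have hT1 : G * (K + 1) * √(n : ℝ) ≤ T := hT ▸ Nat.le_ceil _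
  have hT2 : (T : ℝ) < G * (K + 1) * √(n : ℝ) + 1 := hT ▸ Nat.ceil_lt_add_one (by positivity)
  have hshift : ∀ x y x' y' : ℝ, 0 ≤ y → y ≤ α * x → f (x, y) ≤ n →
      |x' - x| ≤ p + 1 → |y' - y| ≤ p + 1 → |f (x', y') - f (x, y)| ≤ T := by
    intro x y x' y' h1 h2 h3 h4 h5
    refine (hG x y x' y' h1 h2 h4 h5).trans (le_trans ?_ hT1)
    have := hK n hn x y h1 h2 h3
    rw [mul_assoc]
    gcongr
    linarith
  have hp0 : (0 : ℝ) ≤ p := Nat.cast_nonneg _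
  have hupper : volume (R n) ≤ ((n + T + 1 : ℕ) : ENNReal) := by
    have hsub : R n ⊆ ⋃ k ∈ Finset.range (n + T + 1), unitSquare ((z k).1 - 1) (z k).2 := by
      rintro ⟨x, y⟩ hxy
      rw [hR] at hxy
      obtain ⟨⟨hy, hyx⟩, -, hfn⟩ := hxy
      simp only at hy hyx
      have h1 := Int.floor_le x
      have h2 := Int.lt_floor_add_one x
      have h3 := Int.floor_le y
      have h4 := Int.lt_floor_add_one y
      have h5 : (0 : ℝ) ≤ ⌊y⌋ := by exact_mod_cast Int.floor_nonneg.2 hy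
      -- Rounding up in `x` and down in `y` stays in the sector.
      have hwS : (((⌊x⌋ : ℝ) + 1, (⌊y⌋ : ℝ)) : ℝ × ℝ) ∈ S := by
        rw [hS]
        exact ⟨⟨h5, by simp only; nlinarith⟩, ⌊x⌋ + 1, ⌊y⌋, by push_cast; rfl, rfl⟩
      obtain ⟨k, hk⟩ := hpack.mapsTo hwS
      have hclose := hshift x y (⌊x⌋ + 1) ⌊y⌋ hy hyx hfn
        (abs_le.2 ⟨by linarith, by linarith⟩) (abs_le.2 ⟨by linarith, by linarith⟩)
      have hkn : (k : ℝ) ≤ n + T := by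
        rw [hk] at hclose
        linarith [(abs_le.1 hclose).2]
      have hkn' : k ≤ n + T := by exact_mod_cast hkn
      simp only [Set.mem_iUnion, Finset.mem_range]
      refine ⟨k, by omega, ?_⟩
      rw [← hzuniq _ hwS k hk]
      exact ⟨⟨by simp only; linarith, by simp only; linarith⟩, ⟨h3, h4⟩⟩
    calc volume (R n) ≤ volume (⋃ k ∈ Finset.range (n + T + 1),
          unitSquare ((z k).1 - 1) (z k).2) := measure_mono hsub
      _ ≤ ∑ k ∈ Finset.range (n + T + 1), volume (unitSquare ((z k).1 - 1) (z k).2) :=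
        measure_biUnion_finset_le _ _
      _ = ((n + T + 1 : ℕ) : ENNReal) := by simp [volume_unitSquare]
  have hlower : ((n - T + 1 - T : ℕ) : ENNReal) ≤ volume (R n) := by
    have hsub : ⋃ k ∈ Finset.Icc T (n - T), unitSquare ((z k).1 + p) (z k).2 ⊆ R n := by
      rintro ⟨x, y⟩ hxy
      simp only [Set.mem_iUnion, Finset.mem_Icc] at hxy
      obtain ⟨k, ⟨hk1, hk2⟩, ⟨hx1, hx2⟩, ⟨hy1, hy2⟩⟩ := hxy
      simp only at hx1 hx2 hy1 hy2
      have hTk : (T : ℝ) ≤ k := by exact_mod_cast hk1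
      have hkT : (k : ℝ) + T ≤ n := by
        have : k + T ≤ n := by omega
        exact_mod_cast this
      obtain ⟨s1, s2⟩ := hzsec k
      have hfz := hzf k
      have hclose := hshift (z k).1 (z k).2 x y s1 s2
        (by rw [Prod.mk.eta, hfz]; linarith [(Nat.cast_nonneg T : (0 : ℝ) ≤ T)])
        (abs_le.2 ⟨by linarith, by linarith⟩) (abs_le.2 ⟨by linarith, by linarith⟩)
      rw [Prod.mk.eta, hfz, abs_le] at hclose
      rw [hR]
      refine ⟨⟨by simp only; linarith, ?_⟩, by linarith [hclose.1], by linarith [hclose.2]⟩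
      have := mul_le_mul_of_nonneg_left hx1 hα.le
      simp only
      linarith
    have hdisj : Set.PairwiseDisjoint (↑(Finset.Icc T (n - T)))
        (fun k => unitSquare ((z k).1 + p) (z k).2) := by
      intro i _ j _ hij
      refine Set.disjoint_left.2 ?_
      rintro ⟨x, y⟩ ⟨⟨hx1, hx2⟩, ⟨hy1, hy2⟩⟩ ⟨⟨hx1', hx2'⟩, ⟨hy1', hy2'⟩⟩
      refine hij (hzinj ?_)
      obtain ⟨m, l, hm, hl⟩ := hzint i
      obtain ⟨m', l', hm', hl'⟩ := hzint j
      simp only [hm, hl, hm', hl'] at hx1 hx2 hy1 hy2 hx1' hx2' hy1' hy2'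
      have a1 : (m : ℝ) < m' + 1 := by linarith
      have a2 : (m' : ℝ) < m + 1 := by linarith
      have a3 : (l : ℝ) < l' + 1 := by linarith
      have a4 : (l' : ℝ) < l + 1 := by linarith
      have b1 : m < m' + 1 := by exact_mod_cast a1
      have b2 : m' < m + 1 := by exact_mod_cast a2
      have b3 : l < l' + 1 := by exact_mod_cast a3
      have b4 : l' < l + 1 := by exact_mod_cast a4
      have c1 : m = m' := by omega
      have c2 : l = l' := by omega
      exact Prod.ext (by rw [hm, hm', c1]) (by rw [hl, hl', c2])
    calc ((n - T + 1 - T : ℕ) : ENNReal)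
        = ∑ k ∈ Finset.Icc T (n - T), volume (unitSquare ((z k).1 + p) (z k).2) := by
          simp only [volume_unitSquare, Finset.sum_const, Nat.card_Icc, nsmul_eq_mul, mul_one]
      _ = volume (⋃ k ∈ Finset.Icc T (n - T), unitSquare ((z k).1 + p) (z k).2) :=
          (measure_biUnion_finset hdisj fun k _ => measurableSet_unitSquare _ _).symm
      _ ≤ volume (R n) := measure_mono hsub
  have hfin : volume (R n) ≠ ⊤ := ne_top_of_le_ne_top (ENNReal.natCast_ne_top _) hupper
  have hup : (volume (R n)).toReal ≤ n + T + 1 := by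
    have := ENNReal.toReal_mono (ENNReal.natCast_ne_top _) hupper
    rw [ENNReal.toReal_natCast] at this
    exact_mod_cast this
  have hlow : (n : ℝ) + 1 - 2 * T ≤ (volume (R n)).toReal := by
    have h1 := ENNReal.toReal_mono hfin hlower
    rw [ENNReal.toReal_natCast] at h1
    have h2 : n + 1 ≤ (n - T + 1 - T) + 2 * T := by omega
    have h3 : (n : ℝ) + 1 ≤ ((n - T + 1 - T : ℕ) : ℝ) + 2 * T := by exact_mod_cast h2
    linarith
  rw [hcount]
  push_cast
  have hT0 : (0 : ℝ) ≤ T := Nat.cast_nonneg _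
  rw [abs_le]
  constructor <;> nlinarith
end

section
/- Suppose P(x,y) = A·x(x−1)/2 + B·xy + C·y(y−1)/2 + D·x + E·y + F with A,B,C,D,E,F ∈ ℤ is a quadratic packing polynomial on the sector S(α) for some α > 0. Then, as n → ∞, area(R_n) = (n/2)·∫₀^{arctan α} dθ / ((A/2)cos²θ + B·cos θ·sin θ + (C/2)sin²θ) + O(√n), where R_n = {(x,y) ∈ S(α) : 0 ≤ P(x,y) ≤ n}. -/
/-!
Write `Q(x, y) = A/2 x² + B x y + C/2 y²` for the quadratic part of `P`.

* `Q` is positive on the closed sector away from the origin (`form_pos_on_sector`). If `Q ≤ 0` along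
  the direction of slope `s`, then near that direction `P ≤ n` allows `|y - s x| ≲ n / x`, so there
  are `≳ ∑ n / x ≳ n log n` lattice points with `P ≤ n`, the sum being over `√n ≲ x ≲ n`. A packing
  polynomial has exactly `n + 1` of them. No case distinction on the rationality of `α` or on
  whether `Q` is definite is needed.
* When `Q` is positive on the sector, polar coordinates show that `{Q ≤ t}` has area
  `t / 2 * ∫ dθ / Q(cos θ, sin θ)` (`volume_sublevel`).
* By compactness `Q ≥ δ x²` on the sector with `δ > 0`, so on `P ≤ n` the linear part of `P` is
  `O(√n)`, and `R_n` lies between `{Q ≤ n - C √n}` and `{Q ≤ n + C √n}`, up to a bounded set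
  (`area_of_form_pos`).
-/
open intervalIntegral Real

/-! ### Areas of sublevel sets in polar coordinates -/

/-- Polar angles of the nonzero points of the sector. -/
lemma sector_angle {α θ : ℝ} (hα : 0 < α) (h1 : -π < θ) (h2 : θ < π) :
    (0 ≤ sin θ ∧ sin θ ≤ α * cos θ) ↔ θ ∈ Set.Icc 0 (arctan α) := by
  constructor
  · rintro ⟨hs, hc⟩
    have h0 : 0 ≤ θ := by
      by_contra! h
      linarith [sin_neg_of_neg_of_neg_pi_lt h h1]
    have hc0 : 0 < cos θ := by
      by_contra! h
      have : sin θ = 0 := by nlinarith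
      have : cos θ = 0 := by nlinarith
      nlinarith [sin_sq_add_cos_sq θ]
    have hpi : θ < π / 2 := by
      by_contra! h
      linarith [cos_nonpos_of_pi_div_two_le_of_le h (by linarith)]
    refine ⟨h0, ?_⟩
    rw [← arctan_tan (by linarith [pi_pos]) hpi, arctan_le_arctan_iff, tan_eq_sin_div_cos,
      div_le_iff₀ hc0]
    exact hc
  · rintro ⟨h0, hle⟩
    have hpi : θ < π / 2 := hle.trans_lt (arctan_lt_pi_div_two α)
    have hc0 : 0 < cos θ := cos_pos_of_mem_Ioo ⟨by linarith [pi_pos], hpi⟩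
    refine ⟨sin_nonneg_of_nonneg_of_le_pi h0 h2.le, ?_⟩
    rw [← div_le_iff₀ hc0, ← tan_eq_sin_div_cos, ← arctan_le_arctan_iff,
      arctan_tan (by linarith [pi_pos]) hpi]
    exact hle

lemma form_pos_on_arc {α a b c : ℝ} (hα : 0 < α)
    (hq : ∀ s ∈ Set.Icc 0 α, 0 < a + b * s + c * s ^ 2) {θ : ℝ} (hθ : θ ∈ Set.Icc 0 (arctan α)) :
    0 < a * cos θ ^ 2 + b * cos θ * sin θ + c * sin θ ^ 2 := by
  have hpi : θ < π / 2 := hθ.2.trans_lt (arctan_lt_pi_div_two α)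
  have h0 := hθ.1
  have hc0 : 0 < cos θ := cos_pos_of_mem_Ioo ⟨by linarith [pi_pos], hpi⟩
  obtain ⟨h1, h2⟩ := (sector_angle hα (by linarith [pi_pos]) (by linarith [pi_pos])).2 hθ
  have h := hq (sin θ / cos θ) ⟨by positivity, (div_le_iff₀ hc0).2 h2⟩
  have : a * cos θ ^ 2 + b * cos θ * sin θ + c * sin θ ^ 2
      = cos θ ^ 2 * (a + b * (sin θ / cos θ) + c * (sin θ / cos θ) ^ 2) := by
    field_simp
  rw [this]; positivity

open MeasureTheory in
/-- Area in polar coordinates of a sublevel set of a quadratic form in the sector. -/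
lemma volume_sublevel {α a b c : ℝ} (hα : 0 < α)
    (hq : ∀ s ∈ Set.Icc 0 α, 0 < a + b * s + c * s ^ 2) {t : ℝ} (ht : 0 ≤ t) :
    volume {z : ℝ × ℝ | (0 ≤ z.2 ∧ z.2 ≤ α * z.1) ∧
        a * z.1 ^ 2 + b * z.1 * z.2 + c * z.2 ^ 2 ≤ t} =
      ENNReal.ofReal (t / 2 * ∫ θ in (0 : ℝ)..(arctan α),
        1 / (a * cos θ ^ 2 + b * cos θ * sin θ + c * sin θ ^ 2)) := by
  set W : Set (ℝ × ℝ) := {z : ℝ × ℝ | (0 ≤ z.2 ∧ z.2 ≤ α * z.1) ∧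
        a * z.1 ^ 2 + b * z.1 * z.2 + c * z.2 ^ 2 ≤ t} with hW
  set q : ℝ → ℝ := fun θ => a * cos θ ^ 2 + b * cos θ * sin θ + c * sin θ ^ 2 with hqdef
  have hqpos : ∀ θ ∈ Set.Icc 0 (arctan α), 0 < q θ := fun θ hθ => form_pos_on_arc hα hq hθ
  have hqc : Continuous q := by fun_prop
  have hWm : MeasurableSet W := by
    apply IsClosed.measurableSet
    have h1 : IsClosed {z : ℝ × ℝ | 0 ≤ z.2} := isClosed_le (by fun_prop) (by fun_prop)
    have h2 : IsClosed {z : ℝ × ℝ | z.2 ≤ α * z.1} := isClosed_le (by fun_prop) (by fun_prop)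
    have h3 : IsClosed {z : ℝ × ℝ | a * z.1 ^ 2 + b * z.1 * z.2 + c * z.2 ^ 2 ≤ t} :=
      isClosed_le (by fun_prop) (by fun_prop)
    exact (h1.inter h2).inter h3
  have hαpi : arctan α < π / 2 := arctan_lt_pi_div_two α
  have hα0 : 0 ≤ arctan α := arctan_nonneg.2 hα.le
  rw [← lintegral_indicator_one hWm, ← lintegral_comp_polarCoord_symm]
  -- on the polar chart, the indicator becomes that of `0 < r ≤ √(t / q θ)`, `0 ≤ θ ≤ arctan α`
  have hind : ∀ p : ℝ × ℝ, polarCoord.target.indicator (fun p : ℝ × ℝ =>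
      ENNReal.ofReal p.1 • W.indicator (1 : ℝ × ℝ → ENNReal) (polarCoord.symm p)) p =
      (Set.Icc 0 (arctan α)).indicator (fun θ => (Set.Ioc 0 (√(t / q θ))).indicator
        (fun r => ENNReal.ofReal r) p.1) p.2 := by
    rintro ⟨r, θ⟩
    by_cases hp : (r, θ) ∈ polarCoord.target
    · rw [Set.indicator_of_mem hp]
      obtain ⟨hr, h1, h2⟩ := hp
      simp only [Set.mem_Ioi] at hr
      have hmem : polarCoord.symm (r, θ) ∈ W ↔
          θ ∈ Set.Icc 0 (arctan α) ∧ r ^ 2 * q θ ≤ t := by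
        rw [← sector_angle hα h1 h2]
        simp only [hW, polarCoord_symm_apply, Set.mem_ofPred_eq, hqdef]
        refine and_congr (and_congr ?_ ?_) ?_
        · exact mul_nonneg_iff_of_pos_left hr
        · rw [show α * (r * cos θ) = r * (α * cos θ) by ring]
          exact mul_le_mul_iff_right₀ hr
        · ring_nf
      by_cases hθ : θ ∈ Set.Icc 0 (arctan α)
      · rw [Set.indicator_of_mem hθ]
        have hiff : r ^ 2 * q θ ≤ t ↔ r ∈ Set.Ioc 0 (√(t / q θ)) := by
          rw [Set.mem_Ioc, le_sqrt hr.le (div_nonneg ht (hqpos θ hθ).le),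
            le_div_iff₀ (hqpos θ hθ)]
          simp [hr]
        by_cases hr' : r ^ 2 * q θ ≤ t
        · rw [Set.indicator_of_mem (hmem.2 ⟨hθ, hr'⟩), Set.indicator_of_mem (hiff.1 hr')]
          simp
        · rw [Set.indicator_of_notMem (fun h => hr' (hmem.1 h).2),
            Set.indicator_of_notMem (fun h => hr' (hiff.2 h))]
          simp
      · rw [Set.indicator_of_notMem hθ, Set.indicator_of_notMem (fun h => hθ (hmem.1 h).1)]
        simp
    · rw [Set.indicator_of_notMem hp]
      symm
      by_cases hθ : θ ∈ Set.Icc 0 (arctan α)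
      · rw [Set.indicator_of_mem hθ]
        apply Set.indicator_of_notMem
        intro hr
        exact hp ⟨hr.1, by simp only; linarith [hθ.1, pi_pos], by simp only; linarith [hθ.2, pi_pos]⟩
      · rw [Set.indicator_of_notMem hθ]
  have hrad : ∀ s : ℝ, 0 ≤ s →
      ∫⁻ r, (Set.Ioc 0 (√s)).indicator (fun r => ENNReal.ofReal r) r = ENNReal.ofReal (s / 2) := by
    intro s hs
    rw [lintegral_indicator measurableSet_Ioc, ← ofReal_integral_eq_lintegral_ofReal]
    · rw [← intervalIntegral.integral_of_le (sqrt_nonneg s), integral_id, sq_sqrt hs]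
      simp
    · exact (continuous_id.integrableOn_Icc).mono_set Set.Ioc_subset_Icc_self
    · filter_upwards [ae_restrict_mem measurableSet_Ioc] with r hr using hr.1.le
  rw [← lintegral_indicator polarCoord.open_target.measurableSet, lintegral_congr hind,
    Measure.volume_eq_prod]
  have hinner : ∀ θ, ∫⁻ r, (Set.Icc 0 (arctan α)).indicator (fun θ => (Set.Ioc 0 (√(t / q θ))).indicator
        (fun r => ENNReal.ofReal r) r) θ = (Set.Icc 0 (arctan α)).indicator
          (fun θ => ENNReal.ofReal (t / q θ / 2)) θ := by
    intro θ
    by_cases hθ : θ ∈ Set.Icc 0 (arctan α)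
    · simp only [Set.indicator_of_mem hθ]
      exact hrad _ (div_nonneg ht (hqpos θ hθ).le)
    · simp only [Set.indicator_of_notMem hθ, lintegral_zero]
  have hmeas : Measurable fun p : ℝ × ℝ => (Set.Icc 0 (arctan α)).indicator
      (fun θ => (Set.Ioc 0 (√(t / q θ))).indicator (fun r => ENNReal.ofReal r) p.1) p.2 := by
    have : (fun p : ℝ × ℝ => (Set.Icc 0 (arctan α)).indicator
      (fun θ => (Set.Ioc 0 (√(t / q θ))).indicator (fun r => ENNReal.ofReal r) p.1) p.2) =
      ({p : ℝ × ℝ | p.2 ∈ Set.Icc 0 (arctan α)} ∩ ({p : ℝ × ℝ | 0 < p.1} ∩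
        {p : ℝ × ℝ | p.1 ≤ √(t / q p.2)})).indicator (fun p => ENNReal.ofReal p.1) := by
      ext ⟨r, θ⟩
      by_cases h1 : θ ∈ Set.Icc 0 (arctan α)
      · rw [Set.indicator_of_mem h1]
        by_cases h2 : r ∈ Set.Ioc 0 (√(t / q θ))
        · rw [Set.indicator_of_mem h2, Set.indicator_of_mem]
          exact ⟨h1, h2⟩
        · rw [Set.indicator_of_notMem h2, Set.indicator_of_notMem]
          exact fun h => h2 h.2
      · rw [Set.indicator_of_notMem h1, Set.indicator_of_notMem]
        exact fun h => h1 h.1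
    rw [this]
    have hsqrt : Measurable fun p : ℝ × ℝ => √(t / q p.2) :=
      (measurable_const.div (hqc.measurable.comp measurable_snd)).sqrt
    exact (ENNReal.measurable_ofReal.comp measurable_fst).indicator
      ((measurable_snd measurableSet_Icc).inter
        ((measurableSet_lt measurable_const measurable_fst).inter
          (measurableSet_le measurable_fst hsqrt)))
  rw [lintegral_prod_symm _ hmeas.aemeasurable, lintegral_congr hinner,
    lintegral_indicator measurableSet_Icc, ← ofReal_integral_eq_lintegral_ofReal]
  · rw [integral_Icc_eq_integral_Ioc, ← intervalIntegral.integral_of_le hα0,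
      ← intervalIntegral.integral_const_mul]
    congr 2
    ext θ
    ring
  · refine ContinuousOn.integrableOn_Icc ?_
    exact (continuousOn_const.div hqc.continuousOn fun θ hθ => (hqpos θ hθ).ne').div_const 2
  · filter_upwards [ae_restrict_mem measurableSet_Icc] with θ hθ
    exact div_nonneg (div_nonneg ht (hqpos θ hθ).le) (by norm_num)

/-! ### Positivity of the quadratic part -/

lemma log_le_sum_inv {a b : ℕ} (ha : 1 ≤ a) (hab : a ≤ b) :
    log (b + 1 : ℝ) - log a ≤ ∑ x ∈ Finset.Icc a b, (1 : ℝ) / x := by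
  have key : ∀ b : ℕ, 1 ≤ b → log (b + 1 : ℝ) - log b ≤ 1 / (b : ℝ) := by
    intro b hb
    have hb0 : (0 : ℝ) < b := by exact_mod_cast hb
    rw [← log_div (by positivity) hb0.ne']
    refine (log_le_sub_one_of_pos (by positivity)).trans (le_of_eq ?_)
    field_simp
    ring
  induction b, hab using Nat.le_induction with
  | base => simpa using key a ha
  | succ b hb ih =>
    rw [← Finset.insert_Icc_right_eq_Icc_add_one (by omega), Finset.sum_insert (by simp)]
    have := key (b + 1) (by omega)
    push_cast at this ⊢
    linarith

set_option maxHeartbeats 1000000 in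
/-- The quadratic part of a packing polynomial is positive on the closed sector. Otherwise, let `s₀`
be a slope where it is nonpositive. Among the lattice points of abscissa `x`, about `n / x` lie so
close to the line `y = s₀ x` that `P ≤ n`. Summed over `√n ≲ x ≲ n`, this gives at least
`const * n * log n` lattice points with `P ≤ n`, whereas injectivity allows only `n + 1`. -/
lemma form_pos_on_sector {α a b c d e f : ℝ} (hα : 0 < α) {P : ℝ → ℝ → ℝ}
    (hP : ∀ x y, P x y = a * x ^ 2 + b * x * y + c * y ^ 2 + d * x + e * y + f)
    (hpack : Set.BijOn (fun z : ℝ × ℝ => P z.1 z.2)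
        {z : ℝ × ℝ | (0 ≤ z.2 ∧ z.2 ≤ α * z.1) ∧ ∃ m n : ℤ, z.1 = m ∧ z.2 = n}
        {x : ℝ | ∃ k : ℕ, x = k}) :
    ∀ s ∈ Set.Icc 0 α, 0 < a + b * s + c * s ^ 2 := by
  by_contra! hcon
  obtain ⟨s, ⟨hs0, hsα⟩, hs⟩ := hcon
  obtain ⟨K, hK⟩ := exists_nat_ge
    (max (max (|b| + |c| * (2 * α)) (|d| + |e| * α + |f|)) (max (1 / α) 1))
  have hK1 : |b| + |c| * (2 * α) ≤ K := le_trans (by simp) hK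
  have hK2 : |d| + |e| * α + |f| ≤ K := le_trans (by simp) hK
  have hK3 : 1 / α ≤ K := le_trans (by simp) hK
  have hK4 : (1 : ℝ) ≤ K := le_trans (by simp) hK
  have hK5 : 1 ≤ K := by exact_mod_cast hK4
  rw [div_le_iff₀ hα] at hK3
  -- below, `m` is the parameter of `n = 4K²m²`, and `x` ranges over `[2Km, 2Km²]`
  suffices hlog : ∀ m : ℕ, 1 ≤ m → log m ≤ 5 * K by
    obtain ⟨m, hm⟩ := exists_nat_gt (exp (5 * K))
    have hm0 : (0 : ℝ) < m := (exp_pos _).trans hm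
    have := hlog m (by exact_mod_cast hm0)
    rw [← log_lt_log_iff (exp_pos _) hm0, log_exp] at hm
    linarith
  intro m hm
  have hm1 : (1 : ℝ) ≤ m := by exact_mod_cast hm
  -- points of the sector near the line of slope `s` have small values
  have hval : ∀ x y : ℝ, 1 ≤ x → x ≤ 2 * K * m ^ 2 → 0 ≤ y → y ≤ α * x →
      |y - s * x| ≤ 2 * K * m ^ 2 / x → P x y ≤ 4 * K ^ 2 * m ^ 2 := by
    intro x y hx1 hx hy0 hy hys
    have hx0 : 0 < x := by linarith
    have e1 : P x y = x ^ 2 * (a + b * s + c * s ^ 2) +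
        (y - s * x) * (b * x + c * (y + s * x)) + (d * x + e * y + f) := by
      rw [hP]; ring
    have h1 : x ^ 2 * (a + b * s + c * s ^ 2) ≤ 0 :=
      mul_nonpos_of_nonneg_of_nonpos (by positivity) hs
    have h2 : |b * x + c * (y + s * x)| ≤ K * x := by
      have hsx : 0 ≤ s * x := by positivity
      calc |b * x + c * (y + s * x)| ≤ |b * x| + |c * (y + s * x)| := abs_add_le _ _
        _ = |b| * x + |c| * (y + s * x) := by
          rw [abs_mul, abs_mul, abs_of_pos hx0, abs_of_nonneg (add_nonneg hy0 hsx)]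
        _ ≤ |b| * x + |c| * (2 * α * x) := by gcongr; nlinarith
        _ = (|b| + |c| * (2 * α)) * x := by ring
        _ ≤ K * x := by gcongr
    have h3 : (y - s * x) * (b * x + c * (y + s * x)) ≤ 2 * K * m ^ 2 / x * (K * x) := by
      refine (le_abs_self _).trans ?_
      rw [abs_mul]
      gcongr
    have h3' : 2 * K * m ^ 2 / x * (K * x) = 2 * K ^ 2 * (m : ℝ) ^ 2 := by field_simp
    have h4 : d * x + e * y + f ≤ K * x := by
      calc d * x + e * y + f ≤ |d| * x + |e| * (α * x) + |f| * x := by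
            have := le_abs_self d
            have := le_abs_self f
            have : e * y ≤ |e| * (α * x) :=
              (mul_le_mul_of_nonneg_right (le_abs_self e) hy0).trans (by gcongr)
            nlinarith [abs_nonneg f, mul_le_mul_of_nonneg_right (le_abs_self d) hx0.le]
        _ = (|d| + |e| * α + |f|) * x := by ring
        _ ≤ K * x := by gcongr
    have h5 : K * x ≤ K * (2 * K * m ^ 2) := by gcongr
    rw [e1]
    nlinarith
  -- the vertical section at `x` contains an interval of length `2Km² / x` of such points, on
  -- whichever side of the line there is enough room
  have hint : ∀ x : ℕ, 2 * K * m ≤ x → ∃ u : ℝ, 0 ≤ u ∧ u + 2 * K * m ^ 2 / x ≤ α * x ∧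
      ∀ y, u ≤ y → y ≤ u + 2 * K * m ^ 2 / x → |y - s * x| ≤ 2 * K * m ^ 2 / x := by
    intro x hx
    have hx' : 2 * K * (m : ℝ) ≤ x := by exact_mod_cast hx
    have hx0 : (0 : ℝ) < x := lt_of_lt_of_le (by positivity) hx'
    have hh0 : 0 ≤ 2 * K * (m : ℝ) ^ 2 / x := by positivity
    have hh : 2 * K * (m : ℝ) ^ 2 / x ≤ α * x / 2 := by
      rw [div_le_iff₀ hx0]
      have h1 : (2 * K * (m : ℝ)) ^ 2 ≤ x ^ 2 := by gcongr
      have h2 : α * (2 * K * (m : ℝ)) ^ 2 ≤ α * x ^ 2 := by gcongr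
      have h3 : 1 * (4 * K * (m : ℝ) ^ 2) ≤ K * α * (4 * K * (m : ℝ) ^ 2) := by gcongr
      nlinarith
    generalize 2 * K * (m : ℝ) ^ 2 / x = h at hh hh0 ⊢
    rcases le_total s (α / 2) with h2 | h2
    · have : s * x ≤ α / 2 * x := by gcongr
      refine ⟨s * x, by positivity, by linarith, fun y hy1 hy2 => ?_⟩
      rw [abs_le]; constructor <;> linarith
    · have : α / 2 * x ≤ s * x := by gcongr
      have : s * x ≤ α * x := by gcongr
      refine ⟨s * x - h, by linarith, by linarith, fun y hy1 hy2 => ?_⟩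
      rw [abs_le]; constructor <;> linarith
  choose! u hu0 hu1 hu2 using hint
  -- `T` indexes the lattice points `(x, ⌈u x⌉ + i)`; `ℕ`-division gives `⌊2Km² / x⌋` values of `i`
  set T : Finset (Σ _ : ℕ, ℕ) := (Finset.Icc (2 * K * m) (2 * K * m ^ 2)).sigma
    fun x => Finset.range (2 * K * m ^ 2 / x) with hT
  have hpt : ∀ p ∈ T, ((0 : ℝ) ≤ (⌈u p.1⌉ + p.2 : ℤ) ∧ ((⌈u p.1⌉ + p.2 : ℤ) : ℝ) ≤ α * p.1) ∧
      P p.1 (⌈u p.1⌉ + p.2 : ℤ) ≤ 4 * K ^ 2 * m ^ 2 := by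
    rintro ⟨x, i⟩ hp
    simp only [hT, Finset.mem_sigma, Finset.mem_Icc, Finset.mem_range] at hp ⊢
    obtain ⟨⟨hx1, hx2⟩, hi⟩ := hp
    have hKm : 1 ≤ 2 * K * m := by nlinarith
    have hx0 : (1 : ℝ) ≤ x := by exact_mod_cast hKm.trans hx1
    have hi' : (i : ℝ) + 1 ≤ 2 * K * m ^ 2 / x := by
      rw [le_div_iff₀ (by linarith)]
      have := (Nat.le_div_iff_mul_le (by omega)).1 hi
      exact_mod_cast this
    have hc1 := Int.le_ceil (u x)
    have hc2 := Int.ceil_lt_add_one (u x)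
    have h0 := hu0 x hx1
    have h1 := hu1 x hx1
    have hi0 : (0 : ℝ) ≤ i := by positivity
    push_cast
    refine ⟨⟨by linarith, by linarith⟩, ?_⟩
    refine hval _ _ hx0 (by exact_mod_cast hx2) (by linarith) (by linarith) ?_
    exact hu2 x hx1 _ (by linarith) (by linarith)
  have hmem : ∀ p ∈ T, ((p.1 : ℝ), ((⌈u p.1⌉ + p.2 : ℤ) : ℝ)) ∈
      {z : ℝ × ℝ | (0 ≤ z.2 ∧ z.2 ≤ α * z.1) ∧ ∃ m n : ℤ, z.1 = m ∧ z.2 = n} :=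
    fun p hp => ⟨(hpt p hp).1, p.1, ⌈u p.1⌉ + p.2, by simp, rfl⟩
  have hnat : ∀ p ∈ T, ∃ k : ℕ, P p.1 (⌈u p.1⌉ + p.2 : ℤ) = k := fun p hp => hpack.mapsTo (hmem p hp)
  choose! g hg using hnat
  have hcard : T.card ≤ 4 * K ^ 2 * m ^ 2 + 1 := by
    rw [← Finset.card_range (4 * K ^ 2 * m ^ 2 + 1)]
    refine Finset.card_le_card_of_injOn g ?_ ?_
    · intro p hp
      have := (hpt p hp).2
      rw [hg p hp] at this
      have : g p ≤ 4 * K ^ 2 * m ^ 2 := by exact_mod_cast this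
      simp only [Finset.coe_range, Set.mem_Iio]
      omega
    · rintro ⟨x, i⟩ hp ⟨x', i'⟩ hp' heq
      have h := hpack.injOn (hmem _ hp) (hmem _ hp') (by
        simp only
        rw [hg _ hp, hg _ hp', heq])
      simp only [Prod.mk.injEq, Nat.cast_inj, Int.cast_inj] at h
      obtain ⟨rfl, h⟩ := h
      simpa using h
  have hsum : K * (m : ℝ) ^ 2 * ∑ x ∈ Finset.Icc (2 * K * m) (2 * K * m ^ 2), (1 : ℝ) / x
      ≤ (T.card : ℝ) := by
    rw [hT, Finset.card_sigma, Finset.mul_sum]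
    push_cast
    refine Finset.sum_le_sum fun x hx => ?_
    rw [Finset.mem_Icc] at hx
    have hKm : 1 ≤ 2 * K * m := by nlinarith
    have hx0 : (0 : ℝ) < x := by exact_mod_cast hKm.trans hx.1
    rw [Finset.card_range]
    have h1 : 1 ≤ 2 * K * m ^ 2 / x := (Nat.one_le_div_iff (by omega)).2 hx.2
    have h2 : 2 * K * m ^ 2 < (2 * K * m ^ 2 / x + 1) * x := by
      have := Nat.lt_div_mul_add (a := 2 * K * m ^ 2) (b := x) (by omega)
      linarith
    have h3 : 2 * K * m ^ 2 ≤ (2 * (2 * K * m ^ 2 / x)) * x :=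
      h2.le.trans (Nat.mul_le_mul_right _ (by omega))
    -- `⌊h⌋ ≥ h / 2` since `h = 2Km² / x ≥ 1`
    generalize 2 * K * m ^ 2 / x = w at h3 ⊢
    have h4 : 2 * K * (m : ℝ) ^ 2 ≤ 2 * w * x := by exact_mod_cast h3
    rw [mul_one_div, div_le_iff₀ hx0]
    linarith
  have hharm := log_le_sum_inv (a := 2 * K * m) (b := 2 * K * m ^ 2) (by nlinarith)
    (Nat.mul_le_mul_left _ (Nat.le_self_pow (by norm_num) m))
  have hlogm : log m ≤ log ((2 * K * m ^ 2 : ℕ) + 1 : ℝ) - log ((2 * K * m : ℕ) : ℝ) := by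
    have : log ((2 * K * m : ℕ) : ℝ) + log m ≤ log ((2 * K * m ^ 2 : ℕ) + 1 : ℝ) := by
      rw [← log_mul (by positivity) (by positivity)]
      apply log_le_log (by positivity)
      push_cast
      have : 2 * K * (m : ℝ) * m = 2 * K * (m : ℝ) ^ 2 := by ring
      linarith
    linarith
  have hKm : 1 ≤ K * (m : ℝ) ^ 2 := one_le_mul_of_one_le_of_one_le hK4 (one_le_pow₀ hm1)
  have hcard' : (T.card : ℝ) ≤ 4 * K ^ 2 * m ^ 2 + 1 := by exact_mod_cast hcard
  have h6 : K * (m : ℝ) ^ 2 * log m ≤ K * (m : ℝ) ^ 2 * (5 * K) := by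
    calc K * (m : ℝ) ^ 2 * log m ≤ T.card :=
          (mul_le_mul_of_nonneg_left (hlogm.trans hharm) (by positivity)).trans hsum
      _ ≤ K * (m : ℝ) ^ 2 * (5 * K) := by nlinarith
  exact le_of_mul_le_mul_left h6 (by linarith)

/-! ### Comparison of the polynomial with its quadratic part -/

open MeasureTheory in
/-- The area asymptotics for a quadratic polynomial with positive quadratic part `Q` on the sector.
There `x` controls the norm, so `P = Q + O(x + 1)` and `{P ≤ n}` lies in `x = O(√n)`. Hence
`{Q ≤ n - C√n} \ {Q ≤ T} ⊆ R_n ⊆ {Q ≤ n + C√n}`, where `{Q ≤ T}` contains the points with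
`P < 0`. -/
lemma area_of_form_pos {α a b c d e f : ℝ} (hα : 0 < α) {P : ℝ → ℝ → ℝ}
    (hP : ∀ x y, P x y = a * x ^ 2 + b * x * y + c * y ^ 2 + d * x + e * y + f)
    (hq : ∀ s ∈ Set.Icc 0 α, 0 < a + b * s + c * s ^ 2) :
    ∃ K : ℝ, 0 < K ∧ ∃ N : ℕ, ∀ n : ℕ, N ≤ n →
      |(volume {z : ℝ × ℝ | (0 ≤ z.2 ∧ z.2 ≤ α * z.1) ∧
          0 ≤ P z.1 z.2 ∧ P z.1 z.2 ≤ (n : ℝ)}).toReal -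
        (n : ℝ) / 2 * ∫ θ in (0 : ℝ)..(arctan α),
          1 / (a * cos θ ^ 2 + b * cos θ * sin θ + c * sin θ ^ 2)| ≤ K * √n := by
  set I := ∫ θ in (0 : ℝ)..(arctan α),
    1 / (a * cos θ ^ 2 + b * cos θ * sin θ + c * sin θ ^ 2) with hI
  have hI0 : 0 ≤ I := by
    apply intervalIntegral.integral_nonneg (arctan_nonneg.2 hα.le)
    intro θ hθ
    exact (div_pos one_pos (form_pos_on_arc hα hq hθ)).le
  set Q : ℝ → ℝ → ℝ := fun x y => a * x ^ 2 + b * x * y + c * y ^ 2 with hQ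
  set W : ℝ → Set (ℝ × ℝ) := fun t => {z : ℝ × ℝ | (0 ≤ z.2 ∧ z.2 ≤ α * z.1) ∧
    Q z.1 z.2 ≤ t} with hW
  have hvol : ∀ t, 0 ≤ t → volume (W t) = ENNReal.ofReal (t / 2 * I) :=
    fun t ht => volume_sublevel hα hq ht
  -- `Q` is coercive on the sector
  obtain ⟨δ, hδ, hQδ⟩ : ∃ δ > 0, ∀ x y, 0 ≤ y → y ≤ α * x → δ * x ^ 2 ≤ Q x y := by
    obtain ⟨s₀, hs₀, hmin⟩ := isCompact_Icc.exists_isMinOn (Set.nonempty_Icc.2 hα.le)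
      (f := fun s => a + b * s + c * s ^ 2) (by fun_prop)
    refine ⟨_, hq s₀ hs₀, fun x y hy hyx => ?_⟩
    rcases (nonneg_of_mul_nonneg_right (hy.trans hyx) hα).eq_or_lt with h0 | h0
    · obtain rfl : x = 0 := h0.symm
      obtain rfl : y = 0 := by linarith
      simp [hQ]
    · have hmem : y / x ∈ Set.Icc 0 α := ⟨by positivity, (div_le_iff₀ h0).2 hyx⟩
      have h1 := hmin hmem
      simp only [Set.mem_ofPred_eq] at h1
      have h2 : Q x y = (a + b * (y / x) + c * (y / x) ^ 2) * x ^ 2 := by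
        simp only [hQ]; field_simp
      rw [h2]
      gcongr
  -- `P` and `Q` differ by a linear term
  obtain ⟨l, hl, hPQ⟩ : ∃ l > 0, ∀ x y, 0 ≤ x → 0 ≤ y → y ≤ α * x →
      |P x y - Q x y| ≤ l * x + l := by
    refine ⟨|d| + |e| * α + |f| + 1, by positivity, fun x y hx hy hyx => ?_⟩
    have h1 : P x y - Q x y = d * x + e * y + f := by rw [hP]; simp only [hQ]; ring
    rw [h1]
    calc |d * x + e * y + f| ≤ |d * x| + |e * y| + |f| := abs_add_three _ _ _
      _ = |d| * x + |e| * y + |f| := by rw [abs_mul, abs_mul, abs_of_nonneg hx, abs_of_nonneg hy]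
      _ ≤ |d| * x + |e| * (α * x) + |f| := by gcongr
      _ ≤ _ := by
        have : 0 ≤ |d| := abs_nonneg d
        have : 0 ≤ |f| * x := by positivity
        have : 0 ≤ |e| * α := by positivity
        linarith
  set M := (1 + 2 * l) / δ + 1 with hM
  have hM0 : 0 < M := by positivity
  have hx0 : ∀ x y, 0 ≤ y → y ≤ α * x → 0 ≤ x := fun x y h1 h2 =>
    nonneg_of_mul_nonneg_right (h1.trans h2) hα
  have hbound : ∀ r x, 1 ≤ r → 0 ≤ x → δ * x ^ 2 ≤ r ^ 2 + l * x + l → x ≤ M * r := by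
    intro r x hr hx h
    rcases le_total x r with hxr | hxr
    · refine hxr.trans ?_
      have : 0 ≤ (1 + 2 * l) / δ * r := by positivity
      rw [hM]; linarith
    · have hxp : 0 < x := by linarith
      have h1 : δ * x * x ≤ (1 + 2 * l) * r * x := by
        have : l ≤ l * r * x := by
          have : 1 ≤ r * x := one_le_mul_of_one_le_of_one_le hr (hr.trans hxr)
          nlinarith
        have : l * x ≤ l * r * x := by
          have : l * x * 1 ≤ l * x * r := by gcongr
          linarith
        have : r ^ 2 ≤ r * x := by nlinarith
        linarith
      have h2 : δ * x ≤ (1 + 2 * l) * r := le_of_mul_le_mul_right h1 hxp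
      have h3 : x ≤ (1 + 2 * l) / δ * r := by
        rw [div_mul_eq_mul_div, le_div_iff₀ hδ]; linarith
      rw [hM]; linarith
  set L := l * (M + 1) with hL
  have hL0 : 0 < L := by positivity
  have hclose : ∀ r x y, 1 ≤ r → 0 ≤ y → y ≤ α * x → x ≤ M * r → |P x y - Q x y| ≤ L * r := by
    intro r x y hr hy hyx hx
    refine (hPQ x y (hx0 x y hy hyx) hy hyx).trans ?_
    have : l * x ≤ l * (M * r) := by gcongr
    rw [hL]; nlinarith
  have hPleQ : ∀ r x y, 1 ≤ r → 0 ≤ y → y ≤ α * x → P x y ≤ r ^ 2 → Q x y ≤ r ^ 2 + L * r := by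
    intro r x y hr hy hyx hPr
    have hx := hx0 x y hy hyx
    have h1 := abs_le.1 (hPQ x y hx hy hyx)
    have h2 := hbound r x hr hx (by linarith [hQδ x y hy hyx, h1.1])
    have h3 := abs_le.1 (hclose r x y hr hy hyx h2)
    linarith [h3.1]
  have hQleP : ∀ r x y, 1 ≤ r → 0 ≤ y → y ≤ α * x → Q x y ≤ r ^ 2 - L * r → P x y ≤ r ^ 2 := by
    intro r x y hr hy hyx hQr
    have hx := hx0 x y hy hyx
    have : 0 ≤ L * r := by positivity
    have : 0 ≤ l * x := by positivity
    have h2 := hbound r x hr hx (by linarith [hQδ x y hy hyx])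
    have h3 := abs_le.1 (hclose r x y hr hy hyx h2)
    linarith [h3.2]
  refine ⟨L * I / 2 + (1 + L) * I / 2 + 1, by positivity, 1, fun n hn => ?_⟩
  set R : Set (ℝ × ℝ) := {z : ℝ × ℝ | (0 ≤ z.2 ∧ z.2 ≤ α * z.1) ∧
          0 ≤ P z.1 z.2 ∧ P z.1 z.2 ≤ (n : ℝ)} with hR
  set r := √(n : ℝ) with hr
  have hrn : r ^ 2 = n := sq_sqrt (Nat.cast_nonneg n)
  have hr1 : 1 ≤ r := by
    rw [hr, one_le_sqrt]; exact_mod_cast hn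
  have hsub : R ⊆ W (n + L * r) := by
    rintro ⟨x, y⟩ ⟨⟨h1, h2⟩, -, h3⟩
    refine ⟨⟨h1, h2⟩, ?_⟩
    rw [← hrn] at h3 ⊢
    exact hPleQ r x y hr1 h1 h2 h3
  have hsup : W (n - L * r) ⊆ R ∪ W (1 + L) := by
    rintro ⟨x, y⟩ ⟨⟨h1, h2⟩, h3⟩
    by_cases h0 : 0 ≤ P x y
    · refine Or.inl ⟨⟨h1, h2⟩, h0, ?_⟩
      rw [← hrn] at h3 ⊢
      exact hQleP r x y hr1 h1 h2 h3
    · refine Or.inr ⟨⟨h1, h2⟩, ?_⟩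
      have := hPleQ 1 x y le_rfl h1 h2 (by linarith)
      simpa using this
  have hup0 : 0 ≤ (n : ℝ) + L * r := by positivity
  have hfin : volume R ≠ ⊤ :=
    ((measure_mono hsub).trans_lt (by rw [hvol _ hup0]; exact ENNReal.ofReal_lt_top)).ne
  have hup : (volume R).toReal ≤ (n + L * r) / 2 * I := by
    refine ENNReal.toReal_le_of_le_ofReal (by positivity) ?_
    rw [← hvol _ hup0]
    exact measure_mono hsub
  -- no lower bound on `n` is needed: the left side is nonpositive once `n < L * r`
  have hlow : (n - L * r) / 2 * I ≤ (volume R).toReal + (1 + L) / 2 * I := by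
    rcases le_total 0 ((n : ℝ) - L * r) with h0 | h0
    · rw [← ENNReal.ofReal_le_ofReal_iff (by positivity), ← hvol _ h0,
        ENNReal.ofReal_add ENNReal.toReal_nonneg (by positivity), ENNReal.ofReal_toReal hfin,
        ← hvol _ (by positivity)]
      exact (measure_mono hsup).trans (measure_union_le _ _)
    · have : (n - L * r) / 2 * I ≤ 0 := mul_nonpos_of_nonpos_of_nonneg (by linarith) hI0
      have : 0 ≤ (1 + L) / 2 * I := by positivity
      linarith [ENNReal.toReal_nonneg (a := volume R)]
  have h1 : (1 + L) * I ≤ (1 + L) * I * r := le_mul_of_one_le_right (by positivity) hr1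
  have h2 : 0 ≤ (1 + L) * I := by positivity
  have h3 : 0 ≤ L * I * r := by positivity
  rw [abs_le]
  constructor <;> linarith

/-- If `P(x,y) = A·x(x−1)/2 + B·xy + C·y(y−1)/2 + D·x + E·y + F` with integer
coefficients is a quadratic packing polynomial on `S(α)`, then
`area(R_n) = (n/2)·∫₀^{arctan α} dθ / ((A/2)cos²θ + B cosθ sinθ + (C/2)sin²θ) + O(√n)`. -/
theorem area_asymptotics_of_packing_polynomial
    (α : ℝ) (hα : 0 < α)
    (A B C D E F : ℤ) (hABC : ¬(A = 0 ∧ B = 0 ∧ C = 0))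
    (P : ℝ → ℝ → ℝ)
    (hP : ∀ x y : ℝ, P x y =
      (A : ℝ) * (x * (x - 1) / 2) + (B : ℝ) * (x * y) + (C : ℝ) * (y * (y - 1) / 2)
        + (D : ℝ) * x + (E : ℝ) * y + (F : ℝ))
    (hpack : Set.BijOn (fun z : ℝ × ℝ => P z.1 z.2)
        {z : ℝ × ℝ | (0 ≤ z.2 ∧ z.2 ≤ α * z.1) ∧ ∃ m n : ℤ, z.1 = m ∧ z.2 = n}
        {x : ℝ | ∃ k : ℕ, x = k})
    (R : ℕ → Set (ℝ × ℝ))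
    (hR : ∀ n : ℕ, R n =
      {z : ℝ × ℝ | (0 ≤ z.2 ∧ z.2 ≤ α * z.1) ∧ 0 ≤ P z.1 z.2 ∧ P z.1 z.2 ≤ (n : ℝ)}) :
    ∃ K : ℝ, 0 < K ∧ ∃ N : ℕ, ∀ n : ℕ, N ≤ n →
      |(MeasureTheory.volume (R n)).toReal -
        (n : ℝ) / 2 * ∫ θ in (0 : ℝ)..(Real.arctan α),
          1 / ((A : ℝ) / 2 * Real.cos θ ^ 2 + (B : ℝ) * Real.cos θ * Real.sin θ
                + (C : ℝ) / 2 * Real.sin θ ^ 2)| ≤ K * Real.sqrt n := by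
  have hP' : ∀ x y, P x y = (A : ℝ) / 2 * x ^ 2 + (B : ℝ) * x * y + (C : ℝ) / 2 * y ^ 2 +
      ((D : ℝ) - A / 2) * x + ((E : ℝ) - C / 2) * y + F := by
    intro x y; rw [hP]; ring
  simp only [hR]
  exact area_of_form_pos hα hP' (form_pos_on_sector hα hP' hpack)
end

section
/- Let P(x,y) = A·x(x−1)/2 + B·xy + C·y(y−1)/2 + D·x + E·y + F with A,B,C,D,E,F ∈ ℤ, and set D′ = D − A/2 and E′ = E − C/2. Let r, s ∈ ℤ with A·r² + 2B·r·s + C·s² ≠ 0. For each i ∈ ℤ define x_i = −((B·r + C·s)·i + r·(D′·r + E′·s)) / (A·r² + 2B·r·s + C·s²) and y_i = ((A·r + B·s)·i − s·(D′·r + E′·s)) / (A·r² + 2B·r·s + C·s²). Then P(x_i + r, y_i + s) = P(x_i − r, y_i − s). -/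
/-- Symmetry of `P` restricted to the lattice lines of direction `(r,s)`:
`P(x_i + r, y_i + s) = P(x_i − r, y_i − s)` around the point of symmetry
`(x_i, y_i)`. -/
theorem symmetry_on_lines
    (A B C D E F : ℤ)
    (P : ℝ → ℝ → ℝ)
    (hP : ∀ x y : ℝ, P x y =
      (A : ℝ) * (x * (x - 1) / 2) + (B : ℝ) * (x * y) + (C : ℝ) * (y * (y - 1) / 2)
        + (D : ℝ) * x + (E : ℝ) * y + (F : ℝ))
    (D' E' : ℝ) (hD' : D' = (D : ℝ) - (A : ℝ) / 2) (hE' : E' = (E : ℝ) - (C : ℝ) / 2)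
    (r s : ℤ) (hrs : (A : ℝ) * r ^ 2 + 2 * (B : ℝ) * r * s + (C : ℝ) * s ^ 2 ≠ 0)
    (i : ℤ)
    (xi yi : ℝ)
    (hxi : xi = -(((B : ℝ) * r + (C : ℝ) * s) * i + (r : ℝ) * (D' * r + E' * s)) /
      ((A : ℝ) * r ^ 2 + 2 * (B : ℝ) * r * s + (C : ℝ) * s ^ 2))
    (hyi : yi = (((A : ℝ) * r + (B : ℝ) * s) * i - (s : ℝ) * (D' * r + E' * s)) /
      ((A : ℝ) * r ^ 2 + 2 * (B : ℝ) * r * s + (C : ℝ) * s ^ 2)) :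
    P (xi + r) (yi + s) = P (xi - r) (yi - s) := by
  -- The difference of the two values is twice the derivative of `P` at `(xi, yi)` in the direction
  -- `(r, s)`, and the point of symmetry is where this derivative vanishes.
  have key : ((A : ℝ) * r + B * s) * xi + ((B : ℝ) * r + C * s) * yi + (D' * r + E' * s) = 0 := by
    rw [eq_div_iff hrs] at hxi hyi
    apply mul_right_cancel₀ hrs
    linear_combination ((A : ℝ) * r + B * s) * hxi + ((B : ℝ) * r + C * s) * hyi
  subst hD' hE'
  rw [hP, hP]
  linear_combination 2 * key
end
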